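/- arXiv:1611.06112 — 4 statements merged into one kernel-verified Lean document; each statement's English description precedes it below -/
import Mathlib

section
/- For every ξ ∈ ℝ³ and λ ∈ ℂ, the characteristic polynomial of the matrix B̂(ξ) satisfies det(B̂(ξ) − λ I₄) = λ⁴ + (1 + γ̄²|ξ|²) λ² + γ̄² ξ₃². -/
/- Common setup: the space ℝ³ (as a Euclidean space), Fourier transform,
   partial derivatives, Sobolev-type norms. -/

noncomputable section

open MeasureTheory Real Complex Filter ENNReal

/-- The space `ℝ³`. -/
abbrev E3 : Type := EuclideanSpace ℝ (Fin 3)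

/-- Fourier transform on `ℝ³`. -/
def FT (f : E3 → ℂ) : E3 → ℂ := FourierTransform.fourier f

/-- Inverse Fourier transform on `ℝ³`. -/
def FTinv (f : E3 → ℂ) : E3 → ℂ := FourierTransformInv.fourierInv f

/-- The point `(x₁, x₂, x₃) ∈ ℝ³`. -/
def pt (x1 x2 x3 : ℝ) : E3 := (EuclideanSpace.equiv (Fin 3) ℝ).symm ![x1, x2, x3]

/-- Fourier transform of a real-valued function. -/
def FTr (f : E3 → ℝ) : E3 → ℂ := FT (fun x => (f x : ℂ))

/-- Partial derivative `∂ᵢ` of a real-valued function. -/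
def pd (i : Fin 3) (f : E3 → ℝ) (x : E3) : ℝ := fderiv ℝ f x (EuclideanSpace.single i 1)

/-- Partial derivative `∂ᵢ` of a complex-valued function. -/
def pdC (i : Fin 3) (f : E3 → ℂ) (x : E3) : ℂ := fderiv ℝ f x (EuclideanSpace.single i 1)

/-- The Fourier symbol `B̂(ξ)` of the penalized operator. -/
def Bhat (γ : ℝ) (ξ : E3) : Matrix (Fin 4) (Fin 4) ℂ :=
  !![0, 1, 0, -(Complex.I * ((γ * ξ 0 : ℝ) : ℂ));
     -1, 0, 0, -(Complex.I * ((γ * ξ 1 : ℝ) : ℂ));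
     0, 0, 0, -(Complex.I * ((γ * ξ 2 : ℝ) : ℂ));
     -(Complex.I * ((γ * ξ 0 : ℝ) : ℂ)), -(Complex.I * ((γ * ξ 1 : ℝ) : ℂ)),
       -(Complex.I * ((γ * ξ 2 : ℝ) : ℂ)), 0]

/-- For every `ξ ∈ ℝ³` and `λ ∈ ℂ`, the characteristic polynomial of
`B̂(ξ)` satisfies `det(B̂(ξ) − λ I₄) = λ⁴ + (1 + γ̄²|ξ|²) λ² + γ̄² ξ₃²`. -/
theorem charpoly_Bhat (γ : ℝ) (hγ : 0 < γ) (ξ : E3) (lam : ℂ) :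
    Matrix.det (Bhat γ ξ - lam • (1 : Matrix (Fin 4) (Fin 4) ℂ)) =
      lam ^ 4 + (1 + ((γ : ℂ)) ^ 2 * ((‖ξ‖ ^ 2 : ℝ) : ℂ)) * lam ^ 2 +
        ((γ : ℂ)) ^ 2 * ((ξ 2 : ℝ) : ℂ) ^ 2 := by
  have hI : Complex.I ^ 2 = -1 := Complex.I_sq
  have hM : Bhat γ ξ - lam • (1 : Matrix (Fin 4) (Fin 4) ℂ) =
      !![-lam, 1, 0, -(Complex.I * ((γ * ξ 0 : ℝ) : ℂ));
        -1, -lam, 0, -(Complex.I * ((γ * ξ 1 : ℝ) : ℂ));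
        0, 0, -lam, -(Complex.I * ((γ * ξ 2 : ℝ) : ℂ));
        -(Complex.I * ((γ * ξ 0 : ℝ) : ℂ)), -(Complex.I * ((γ * ξ 1 : ℝ) : ℂ)),
          -(Complex.I * ((γ * ξ 2 : ℝ) : ℂ)), -lam] := by
    ext i j
    fin_cases i <;> fin_cases j <;> simp [Bhat]
  rw [hM, EuclideanSpace.real_norm_sq_eq, Fin.sum_univ_three]
  simp [Matrix.det_succ_row_zero, Fin.sum_univ_succ, Fin.succAbove]
  ring_nf
  simp only [hI]
  ring
end
end

section
/- For every ξ ∈ ℝ³ and every ε₁, ε₂ ∈ {−1, 1}, the complex number λ_{ε₁,ε₂}(ξ) = ε₁ (i/2)(√(1 + γ̄²|ξ|² + 2γ̄ξ₃) + ε₂ √(1 + γ̄²|ξ|² − 2γ̄ξ₃)) is an eigenvalue of the matrix B̂(ξ). Moreover, if ξ₃ ≠ 0 and ξ_h = (ξ₁,ξ₂) ≠ 0, then the four numbers λ_{ε₁,ε₂}(ξ), (ε₁, ε₂) ∈ {−1,1}², are pairwise distinct, so B̂(ξ) has four distinct eigenvalues. -/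
/- Common setup: the space ℝ³ (as a Euclidean space), Fourier transform,
   partial derivatives, Sobolev-type norms. -/

noncomputable section

open MeasureTheory Real Complex Filter ENNReal

/-- The eigenvalues `λ_{ε₁,ε₂}(ξ)` of `B̂(ξ)`. -/
def lamEV (γ ε1 ε2 : ℝ) (ξ : E3) : ℂ :=
  (ε1 : ℂ) * (Complex.I / 2) *
    (((Real.sqrt (1 + γ ^ 2 * ‖ξ‖ ^ 2 + 2 * γ * ξ 2) +
      ε2 * Real.sqrt (1 + γ ^ 2 * ‖ξ‖ ^ 2 - 2 * γ * ξ 2)) : ℝ) : ℂ)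

theorem lamEV_charpoly (γ ε1 ε2 : ℝ) (ξ : E3) (h1 : ε1 = 1 ∨ ε1 = -1) (h2 : ε2 = 1 ∨ ε2 = -1) :
    (lamEV γ ε1 ε2 ξ) ^ 4 + (1 + (γ : ℂ) ^ 2 * ((ξ 0 : ℂ) ^ 2 + (ξ 1 : ℂ) ^ 2 + (ξ 2 : ℂ) ^ 2))
      * (lamEV γ ε1 ε2 ξ) ^ 2 + (γ : ℂ) ^ 2 * (ξ 2 : ℂ) ^ 2 = 0 := by
  have hn : ‖ξ‖ ^ 2 = ξ 0 ^ 2 + ξ 1 ^ 2 + ξ 2 ^ 2 := by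
    rw [EuclideanSpace.norm_sq_eq]; simp [Fin.sum_univ_three]
  have hA := Real.sq_sqrt (show 0 ≤ 1 + γ ^ 2 * ‖ξ‖ ^ 2 + 2 * γ * ξ 2 by
    rw [hn]; nlinarith [sq_nonneg (γ * ξ 0), sq_nonneg (γ * ξ 1), sq_nonneg (1 + γ * ξ 2)])
  have hB := Real.sq_sqrt (show 0 ≤ 1 + γ ^ 2 * ‖ξ‖ ^ 2 - 2 * γ * ξ 2 by
    rw [hn]; nlinarith [sq_nonneg (γ * ξ 0), sq_nonneg (γ * ξ 1), sq_nonneg (1 - γ * ξ 2)])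
  unfold lamEV
  set A := Real.sqrt (1 + γ ^ 2 * ‖ξ‖ ^ 2 + 2 * γ * ξ 2)
  set B := Real.sqrt (1 + γ ^ 2 * ‖ξ‖ ^ 2 - 2 * γ * ξ 2)
  rw [hn] at hA hB
  have he1 : ε1 ^ 2 = 1 := by rcases h1 with h | h <;> rw [h] <;> norm_num
  have he2 : ε2 ^ 2 = 1 := by rcases h2 with h | h <;> rw [h] <;> norm_num
  have hr : 1 + γ ^ 2 * (ξ 0 ^ 2 + ξ 1 ^ 2 + ξ 2 ^ 2) = (A ^ 2 + B ^ 2) / 2 := by linarith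
  have hc : γ * ξ 2 = (A ^ 2 - B ^ 2) / 4 := by linarith
  have hm : (ε1 * (A + ε2 * B) / 2) ^ 2 = (A ^ 2 + B ^ 2 + 2 * ε2 * (A * B)) / 4 := by
    linear_combination (A + ε2 * B) ^ 2 / 4 * he1 + B ^ 2 / 4 * he2
  have key : (ε1 * (A + ε2 * B) / 2) ^ 4
      - (1 + γ ^ 2 * (ξ 0 ^ 2 + ξ 1 ^ 2 + ξ 2 ^ 2)) * (ε1 * (A + ε2 * B) / 2) ^ 2
      + (γ * ξ 2) ^ 2 = 0 := by
    rw [show (ε1 * (A + ε2 * B) / 2) ^ 4 = ((ε1 * (A + ε2 * B) / 2) ^ 2) ^ 2 by ring, hm, hr, hc]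
    linear_combination A ^ 2 * B ^ 2 / 4 * he2
  have hl : (ε1 : ℂ) * (Complex.I / 2) * ((A + ε2 * B : ℝ) : ℂ)
      = Complex.I * ((ε1 * (A + ε2 * B) / 2 : ℝ) : ℂ) := by
    push_cast; ring
  rw [hl, mul_pow, mul_pow, Complex.I_sq, Complex.I_pow_four]
  have key' := congrArg (fun x : ℝ => (x : ℂ)) key
  generalize ε1 * (A + ε2 * B) / 2 = m at key'
  push_cast at key'
  linear_combination key'

theorem det_Bhat (γ : ℝ) (ξ : E3) (l : ℂ) :
    (Bhat γ ξ - l • (1 : Matrix (Fin 4) (Fin 4) ℂ)).det =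
    l ^ 4 + (1 + (γ : ℂ) ^ 2 * ((ξ 0 : ℂ) ^ 2 + (ξ 1 : ℂ) ^ 2 + (ξ 2 : ℂ) ^ 2))
      * l ^ 2 + (γ : ℂ) ^ 2 * (ξ 2 : ℂ) ^ 2 := by
  have : Bhat γ ξ - l • (1 : Matrix (Fin 4) (Fin 4) ℂ) =
    !![-l, 1, 0, -(Complex.I * ((γ * ξ 0 : ℝ) : ℂ));
     -1, -l, 0, -(Complex.I * ((γ * ξ 1 : ℝ) : ℂ));
     0, 0, -l, -(Complex.I * ((γ * ξ 2 : ℝ) : ℂ));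
     -(Complex.I * ((γ * ξ 0 : ℝ) : ℂ)), -(Complex.I * ((γ * ξ 1 : ℝ) : ℂ)),
       -(Complex.I * ((γ * ξ 2 : ℝ) : ℂ)), -l] := by
    ext i j
    fin_cases i <;> fin_cases j <;> simp [Bhat]
  rw [this]
  simp [Matrix.det_succ_row_zero, Fin.sum_univ_succ, Fin.succAbove]
  ring_nf
  simp only [Complex.I_sq]
  ring

/-- Each `λ_{ε₁,ε₂}(ξ)` is an eigenvalue of `B̂(ξ)`; if `ξ₃ ≠ 0` and
`ξ_h ≠ 0`, the four numbers `λ_{ε₁,ε₂}(ξ)` are pairwise distinct. -/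
theorem eigenvalues_Bhat (γ : ℝ) (hγ : 0 < γ) (ξ : E3) :
    (∀ ε1 ε2 : ℝ, (ε1 = 1 ∨ ε1 = -1) → (ε2 = 1 ∨ ε2 = -1) →
      ∃ v : Fin 4 → ℂ, v ≠ 0 ∧ (Bhat γ ξ).mulVec v = lamEV γ ε1 ε2 ξ • v) ∧
    ((ξ 2 ≠ 0 ∧ ¬(ξ 0 = 0 ∧ ξ 1 = 0)) →
      ∀ ε1 ε2 ε1' ε2' : ℝ, (ε1 = 1 ∨ ε1 = -1) → (ε2 = 1 ∨ ε2 = -1) →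
        (ε1' = 1 ∨ ε1' = -1) → (ε2' = 1 ∨ ε2' = -1) → (ε1, ε2) ≠ (ε1', ε2') →
        lamEV γ ε1 ε2 ξ ≠ lamEV γ ε1' ε2' ξ) := by
  constructor
  · intro ε1 ε2 h1 h2
    have hd := det_Bhat γ ξ (lamEV γ ε1 ε2 ξ)
    rw [lamEV_charpoly γ ε1 ε2 ξ h1 h2] at hd
    obtain ⟨v, hv, h⟩ := Matrix.exists_mulVec_eq_zero_iff.mpr hd
    refine ⟨v, hv, ?_⟩
    rw [Matrix.sub_mulVec, Matrix.smul_mulVec, Matrix.one_mulVec] at h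
    exact sub_eq_zero.mp h
  · rintro ⟨h3, hh⟩ ε1 ε2 ε1' ε2' h1 h2 h1' h2' hne heq
    have hn : ‖ξ‖ ^ 2 = ξ 0 ^ 2 + ξ 1 ^ 2 + ξ 2 ^ 2 := by
      rw [EuclideanSpace.norm_sq_eq]; simp [Fin.sum_univ_three]
    have hpos : 0 < ξ 0 ^ 2 + ξ 1 ^ 2 := by
      by_contra hcon
      exact hh ⟨by nlinarith [sq_nonneg (ξ 0), sq_nonneg (ξ 1)],
        by nlinarith [sq_nonneg (ξ 0), sq_nonneg (ξ 1)]⟩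
    have hpos' : 0 < γ ^ 2 * (ξ 0 ^ 2 + ξ 1 ^ 2) := by positivity
    have hA0 : 0 < 1 + γ ^ 2 * ‖ξ‖ ^ 2 + 2 * γ * ξ 2 := by
      rw [hn]; nlinarith [sq_nonneg (1 + γ * ξ 2)]
    have hB0 : 0 < 1 + γ ^ 2 * ‖ξ‖ ^ 2 - 2 * γ * ξ 2 := by
      rw [hn]; nlinarith [sq_nonneg (1 - γ * ξ 2)]
    have hA := Real.sq_sqrt hA0.le
    have hB := Real.sq_sqrt hB0.le
    have hAp := Real.sqrt_pos.mpr hA0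
    have hBp := Real.sqrt_pos.mpr hB0
    unfold lamEV at heq
    set A := Real.sqrt (1 + γ ^ 2 * ‖ξ‖ ^ 2 + 2 * γ * ξ 2)
    set B := Real.sqrt (1 + γ ^ 2 * ‖ξ‖ ^ 2 - 2 * γ * ξ 2)
    have hAB : A ≠ B := by
      intro h
      rw [h] at hA
      have : γ * ξ 2 = 0 := by linarith
      exact (mul_ne_zero hγ.ne' h3) this
    have hr : ε1 * (A + ε2 * B) = ε1' * (A + ε2' * B) := by
      have := congrArg Complex.im heq
      simp at this
      linarith
    rcases h1 with rfl | rfl <;> rcases h2 with rfl | rfl <;> rcases h1' with rfl | rfl <;>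
      rcases h2' with rfl | rfl <;>
      first
        | exact hne rfl
        | linarith
        | exact hAB (by linarith)
end
end

section
/- Let 0 < r ≤ 1 ≤ R. There exist constants C₁, C₂ > 0, depending only on γ̄, such that for each of the four phases λ = λ_{ε₁,ε₂} and every ξ ∈ C_{r/2,2R}, the derivative a_λ(ξ) = ∂_{ξ₂} λ(ξ) satisfies C₁ R^{−3} r |ξ₂| ≤ |a_λ(ξ)| ≤ C₂ r^{−1}, and moreover |∂_{ξ₂} a_λ(ξ)| ≤ C₂ r^{−1}. -/
/- Common setup: the space ℝ³ (as a Euclidean space), Fourier transform,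
   partial derivatives, Sobolev-type norms. -/

noncomputable section

open MeasureTheory Real Complex Filter ENNReal

/-- A smooth cut-off function `ψ` with values in `[0,1]`, equal to `1` on `(-∞,1]`
and to `0` on `[2,∞)`. -/
def IsCutoff (ψ : ℝ → ℝ) : Prop :=
  ContDiff ℝ (⊤ : ℕ∞) ψ ∧ (∀ x, ψ x ∈ Set.Icc (0:ℝ) 1) ∧ (∀ x ≤ (1:ℝ), ψ x = 1) ∧
    (∀ x, (2:ℝ) ≤ x → ψ x = 0)

/-- The norm `|ξ_h|` of the horizontal component of a frequency `ξ`. -/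
def xih (ξ : E3) : ℝ := Real.sqrt (ξ 0 ^ 2 + ξ 1 ^ 2)

/-- The frequency cut-off function `Ψ_{r,R}`. -/
def Psi (ψ : ℝ → ℝ) (r R : ℝ) (ξ : E3) : ℝ :=
  ψ (‖ξ‖ / R) * ((1 - ψ (xih ξ / r)) * (1 - ψ (|ξ 2| / r)))

/-- The set `C_{r,R} = {ξ : |ξ| ≤ R, |ξ_h| ≥ r, |ξ₃| ≥ r}`. -/
def CrR (r R : ℝ) : Set E3 := {ξ | ‖ξ‖ ≤ R ∧ r ≤ xih ξ ∧ r ≤ |ξ 2|}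

/-- The frequency cut-off operator `Ψ_{r,R}(D) g = 𝓕⁻¹(Ψ_{r,R} ĝ)`. -/
def PsiD (ψ : ℝ → ℝ) (r R : ℝ) (g : E3 → ℂ) : E3 → ℂ :=
  FTinv (fun ξ => (Psi ψ r R ξ : ℂ) * FT g ξ)

/-- The derivative `a_λ(ξ) = ∂_{ξ₂} λ_{ε₁,ε₂}(ξ) = ε₁ (iγ̄²ξ₂/2)(1/A(ξ) + ε₂/B(ξ))`. -/
def aLam (γ ε1 ε2 : ℝ) (ξ : E3) : ℂ :=
  (ε1 : ℂ) * (Complex.I * ((γ ^ 2 * ξ 1 : ℝ) : ℂ) / 2) *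
    (((1 / Real.sqrt (1 + γ ^ 2 * ‖ξ‖ ^ 2 + 2 * γ * ξ 2) +
      ε2 / Real.sqrt (1 + γ ^ 2 * ‖ξ‖ ^ 2 - 2 * γ * ξ 2)) : ℝ) : ℂ)

/-- The radicand, with `s = ±1`. -/
def qrad (γ s : ℝ) (ξ : E3) : ℝ := 1 + γ ^ 2 * ‖ξ‖ ^ 2 + s * (2 * γ * ξ 2)

lemma normsq_E3 (ξ : E3) : ‖ξ‖ ^ 2 = ξ 0 ^ 2 + ξ 1 ^ 2 + ξ 2 ^ 2 := by
  rw [EuclideanSpace.real_norm_sq_eq, Fin.sum_univ_three]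

lemma sqrt_qrad_deriv (γ s : ℝ) (ξ : E3) (h : qrad γ s ξ ≠ 0) :
    ∃ L : E3 →L[ℝ] ℝ, HasFDerivAt (fun ξ => Real.sqrt (qrad γ s ξ)) L ξ ∧
      L (EuclideanSpace.single 1 1) = γ ^ 2 * ξ 1 / Real.sqrt (qrad γ s ξ) := by
  have h1 : HasFDerivAt (fun ξ : E3 => ‖ξ‖ ^ 2) (2 • innerSL ℝ ξ) ξ :=
    (hasStrictFDerivAt_norm_sq ξ).hasFDerivAt
  have h2 : HasFDerivAt (fun ξ : E3 => ξ 2) (EuclideanSpace.proj 2 : E3 →L[ℝ] ℝ) ξ :=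
    (EuclideanSpace.proj 2 : E3 →L[ℝ] ℝ).hasFDerivAt
  have h3 := ((h1.const_mul (γ ^ 2)).const_add 1).add ((h2.const_mul (2 * γ)).const_mul s)
  have h4 := HasFDerivAt.sqrt (f := qrad γ s) h3 h
  refine ⟨_, h4, ?_⟩
  simp [EuclideanSpace.inner_single_right]
  field_simp

lemma cplx_deriv (c : ℂ) (f : E3 → ℝ) (L : E3 →L[ℝ] ℝ) (ξ v : E3) (h : HasFDerivAt f L ξ) :
    fderiv ℝ (fun ξ => c * ((f ξ : ℝ) : ℂ)) ξ v = c * ((L v : ℝ) : ℂ) := by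
  have h1 : HasFDerivAt (fun ξ => ((f ξ : ℝ) : ℂ)) (Complex.ofRealCLM.comp L) ξ :=
    Complex.ofRealCLM.hasFDerivAt.comp ξ h
  have h2 := h1.const_mul c
  rw [h2.fderiv]
  simp

lemma lamEV_eq (γ ε1 ε2 : ℝ) : lamEV γ ε1 ε2 = fun ξ => ((ε1 : ℂ) * (Complex.I / 2)) *
    ((Real.sqrt (qrad γ 1 ξ) + ε2 * Real.sqrt (qrad γ (-1) ξ) : ℝ) : ℂ) := by
  funext ξ
  simp only [lamEV, qrad, one_mul, neg_mul, sub_eq_add_neg]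

lemma aLam_eq (γ ε1 ε2 : ℝ) : aLam γ ε1 ε2 = fun ξ => ((ε1 : ℂ) * (Complex.I / 2)) *
    ((γ ^ 2 * ξ 1 * ((Real.sqrt (qrad γ 1 ξ))⁻¹ + ε2 * (Real.sqrt (qrad γ (-1) ξ))⁻¹) : ℝ) : ℂ) := by
  funext ξ
  simp only [aLam, qrad, one_mul, neg_mul, sub_eq_add_neg, div_eq_mul_inv]
  push_cast
  ring

lemma norm_coef (ε1 x : ℝ) (h : ε1 = 1 ∨ ε1 = -1) :
    ‖((ε1 : ℂ) * (Complex.I / 2)) * ((x : ℝ) : ℂ)‖ = |x| / 2 := by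
  rcases h with rfl | rfl <;> simp <;> ring

lemma inv_lower (A B M γ r t ε2 : ℝ) (hA : 0 < A) (hB : 0 < B) (hAM : A ≤ M) (hBM : B ≤ M)
    (hγ : 0 < γ) (ht : r / 2 ≤ |t|) (hr : 0 < r) (hAB : A ^ 2 - B ^ 2 = 4 * γ * t)
    (hε : ε2 = 1 ∨ ε2 = -1) : γ * r / M ^ 3 ≤ |A⁻¹ + ε2 * B⁻¹| := by
  have hM : 0 < M := hA.trans_le hAM
  have key : γ * r / M ^ 3 ≤ |A⁻¹ - B⁻¹| := by
    have e : A⁻¹ - B⁻¹ = -(4 * γ * t) / (A * B * (A + B)) := by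
      rw [← hAB]; field_simp; ring
    have hd : 0 < A * B * (A + B) := by positivity
    rw [e, abs_div, abs_neg, abs_mul, abs_of_pos hd, abs_of_pos (by positivity : 0 < 4 * γ)]
    have hle : A * B * (A + B) ≤ 2 * M ^ 3 := by
      calc A * B * (A + B) ≤ M * M * (M + M) := by gcongr
        _ = _ := by ring
    calc γ * r / M ^ 3 = (4 * γ * (r / 2)) / (2 * M ^ 3) := by field_simp; ring
      _ ≤ _ := by gcongr
  have hi : 0 < A⁻¹ := by positivity
  have hj : 0 < B⁻¹ := by positivity
  rcases hε with rfl | rfl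
  · refine key.trans ?_
    rw [one_mul, abs_of_pos (by positivity : 0 < A⁻¹ + B⁻¹)]
    rw [abs_le]; constructor <;> linarith
  · convert key using 2; ring

lemma deriv_term (γ x A : ℝ) (hA : 0 < A) (h : (γ * x) ^ 2 ≤ A ^ 2) :
    |A⁻¹ - γ ^ 2 * x ^ 2 * (A⁻¹) ^ 3| ≤ A⁻¹ := by
  have h1 : (γ * x) ^ 2 * (A⁻¹) ^ 3 ≤ A⁻¹ := by
    calc (γ * x) ^ 2 * (A⁻¹) ^ 3 ≤ A ^ 2 * (A⁻¹) ^ 3 := by gcongr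
      _ = A⁻¹ := by field_simp
  have h2 : 0 ≤ (γ * x) ^ 2 * (A⁻¹) ^ 3 := by positivity
  have h3 : γ ^ 2 * x ^ 2 * (A⁻¹) ^ 3 = (γ * x) ^ 2 * (A⁻¹) ^ 3 := by ring
  rw [h3, abs_le]; constructor <;> linarith

lemma abs_comb (a b x y ε : ℝ) (hε : ε = 1 ∨ ε = -1) (ha : |a| ≤ x) (hb : |b| ≤ y) :
    |a + ε * b| ≤ x + y := by
  rw [abs_le] at *
  rcases hε with rfl | rfl <;> constructor <;> linarith [ha.1, ha.2, hb.1, hb.2]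

lemma qrad_facts (γ s r R : ℝ) (hγ : 0 < γ) (hr : 0 < r) (hR : 1 ≤ R) (hs : s = 1 ∨ s = -1)
    (ξ : E3) (hξ : ξ ∈ CrR (r / 2) (2 * R)) :
    0 < qrad γ s ξ ∧ γ * (r / 2) ≤ Real.sqrt (qrad γ s ξ) ∧
      γ * |ξ 1| ≤ Real.sqrt (qrad γ s ξ) ∧
      Real.sqrt (qrad γ s ξ) ≤ (1 + 2 * γ) * R := by
  obtain ⟨h1, h2, h3⟩ := hξ
  have hs2 : s ^ 2 = 1 := by rcases hs with rfl | rfl <;> norm_num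
  have hq : qrad γ s ξ = γ ^ 2 * (ξ 0 ^ 2 + ξ 1 ^ 2) + (1 + s * (γ * ξ 2)) ^ 2 := by
    rw [qrad, normsq_E3]
    linear_combination (-(γ * ξ 2) ^ 2) * hs2
  have hx : (r / 2) ^ 2 ≤ ξ 0 ^ 2 + ξ 1 ^ 2 := by
    rw [xih] at h2
    exact (Real.le_sqrt (by positivity) (by positivity)).1 h2
  have hlow : (γ * (r / 2)) ^ 2 ≤ qrad γ s ξ := by
    rw [hq, mul_pow]
    have := mul_le_mul_of_nonneg_left hx (sq_nonneg γ)
    nlinarith [sq_nonneg (1 + s * (γ * ξ 2))]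
  refine ⟨lt_of_lt_of_le (by positivity) hlow, Real.le_sqrt_of_sq_le hlow, ?_, ?_⟩
  · apply Real.le_sqrt_of_sq_le
    rw [hq, mul_pow, sq_abs]
    nlinarith [sq_nonneg (1 + s * (γ * ξ 2)), sq_nonneg (γ * ξ 0)]
  · have hn := norm_nonneg ξ
    have h5 : |ξ 2| ≤ ‖ξ‖ := by
      refine abs_le_of_sq_le_sq ?_ hn
      rw [normsq_E3]; nlinarith [sq_nonneg (ξ 0), sq_nonneg (ξ 1)]
    have h6 : s * ξ 2 ≤ ‖ξ‖ := by
      rw [abs_le] at h5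
      rcases hs with rfl | rfl <;> linarith [h5.1, h5.2]
    have h7 : qrad γ s ξ ≤ (1 + γ * ‖ξ‖) ^ 2 := by
      rw [qrad]; nlinarith [mul_le_mul_of_nonneg_left h6 hγ.le]
    calc Real.sqrt (qrad γ s ξ) ≤ 1 + γ * ‖ξ‖ := (Real.sqrt_le_left (by positivity)).2 h7
      _ ≤ 1 + γ * (2 * R) := by gcongr
      _ ≤ _ := by nlinarith

/-- For `0 < r ≤ 1 ≤ R` there exist `C₁, C₂ > 0` depending only on `γ̄`
such that for each phase `λ = λ_{ε₁,ε₂}` and every `ξ ∈ C_{r/2,2R}`, the derivative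
`a_λ(ξ) = ∂_{ξ₂}λ(ξ)` satisfies `C₁ R^{−3} r |ξ₂| ≤ |a_λ(ξ)| ≤ C₂ r^{−1}` and
`|∂_{ξ₂} a_λ(ξ)| ≤ C₂ r^{−1}`. -/
theorem aLam_bounds (γ : ℝ) (hγ : 0 < γ) :
    ∃ C1 C2 : ℝ, 0 < C1 ∧ 0 < C2 ∧
      ∀ r R : ℝ, 0 < r → r ≤ 1 → 1 ≤ R →
      ∀ ε1 ε2 : ℝ, (ε1 = 1 ∨ ε1 = -1) → (ε2 = 1 ∨ ε2 = -1) →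
      ∀ ξ ∈ CrR (r/2) (2*R),
        fderiv ℝ (lamEV γ ε1 ε2) ξ (EuclideanSpace.single 1 1) = aLam γ ε1 ε2 ξ ∧
        C1 * R ^ (-(3:ℝ)) * r * |ξ 1| ≤ ‖aLam γ ε1 ε2 ξ‖ ∧
        ‖aLam γ ε1 ε2 ξ‖ ≤ C2 * r⁻¹ ∧
        ‖fderiv ℝ (aLam γ ε1 ε2) ξ (EuclideanSpace.single 1 1)‖ ≤ C2 * r⁻¹ := by
  refine ⟨γ ^ 3 / (2 * (1 + 2 * γ) ^ 3), 2 * γ, by positivity, by positivity, ?_⟩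
  intro r R hr hr1 hR ε1 ε2 hε1 hε2 ξ hξ
  obtain ⟨qA, lA, xA, uA⟩ := qrad_facts γ 1 r R hγ hr hR (Or.inl rfl) ξ hξ
  obtain ⟨qB, lB, xB, uB⟩ := qrad_facts γ (-1) r R hγ hr hR (Or.inr rfl) ξ hξ
  obtain ⟨LA, hLA, eA⟩ := sqrt_qrad_deriv γ 1 ξ qA.ne'
  obtain ⟨LB, hLB, eB⟩ := sqrt_qrad_deriv γ (-1) ξ qB.ne'
  have hA : 0 < Real.sqrt (qrad γ 1 ξ) := Real.sqrt_pos.2 qA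
  have hB : 0 < Real.sqrt (qrad γ (-1) ξ) := Real.sqrt_pos.2 qB
  have hAB : Real.sqrt (qrad γ 1 ξ) ^ 2 - Real.sqrt (qrad γ (-1) ξ) ^ 2 = 4 * γ * ξ 2 := by
    rw [Real.sq_sqrt qA.le, Real.sq_sqrt qB.le, qrad, qrad]; ring
  have hx1 : HasFDerivAt (fun ξ : E3 => ξ 1)
      (EuclideanSpace.proj 1 : E3 →L[ℝ] ℝ) ξ :=
    (EuclideanSpace.proj 1 : E3 →L[ℝ] ℝ).hasFDerivAt
  have hiA := (hasDerivAt_inv hA.ne').comp_hasFDerivAt ξ hLA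
  have hiB := (hasDerivAt_inv hB.ne').comp_hasFDerivAt ξ hLB
  have hprod := (hx1.const_mul (γ ^ 2)).mul (hiA.add (hiB.const_mul ε2))
  have habs : |γ * ξ 1| = γ * |ξ 1| := by rw [abs_mul, abs_of_pos hγ]
  have hr' : 1 ≤ r⁻¹ := (one_le_inv₀ hr).2 hr1
  refine ⟨?_, ?_, ?_, ?_⟩
  · rw [lamEV_eq, aLam_eq]
    refine (cplx_deriv _ _ _ ξ _ (hLA.add (hLB.const_mul ε2))).trans ?_
    congr 2
    simp only [add_apply, smul_apply, eA, eB, smul_eq_mul]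
    ring
  · rw [aLam_eq]
    simp only
    rw [norm_coef _ _ hε1, abs_mul, abs_mul, abs_of_pos (by positivity : 0 < γ ^ 2)]
    have key := inv_lower _ _ _ γ r (ξ 2) ε2 hA hB uA uB hγ hξ.2.2 hr hAB hε2
    have hRp : 0 < R := by linarith
    have e : R ^ (-(3:ℝ)) = (R ^ 3)⁻¹ := by
      rw [Real.rpow_neg hRp.le]; norm_cast
    rw [e]
    calc γ ^ 3 / (2 * (1 + 2 * γ) ^ 3) * (R ^ 3)⁻¹ * r * |ξ 1|
        = γ ^ 2 * |ξ 1| * (γ * r / ((1 + 2 * γ) * R) ^ 3) / 2 := by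
          field_simp
      _ ≤ _ := by gcongr
  · rw [aLam_eq]
    simp only
    rw [norm_coef _ _ hε1, abs_mul, abs_mul, abs_of_pos (by positivity : 0 < γ ^ 2)]
    have k := abs_comb _ _ _ _ ε2 hε2 (abs_of_pos (inv_pos.2 hA)).le (abs_of_pos (inv_pos.2 hB)).le
    have k1 : γ * |ξ 1| * (Real.sqrt (qrad γ 1 ξ))⁻¹ ≤ 1 := by
      rw [← div_eq_mul_inv]; exact (div_le_one hA).2 xA
    have k2 : γ * |ξ 1| * (Real.sqrt (qrad γ (-1) ξ))⁻¹ ≤ 1 := by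
      rw [← div_eq_mul_inv]; exact (div_le_one hB).2 xB
    calc _ ≤ γ ^ 2 * |ξ 1| * ((Real.sqrt (qrad γ 1 ξ))⁻¹ + (Real.sqrt (qrad γ (-1) ξ))⁻¹) / 2 := by
          gcongr
      _ = γ * (γ * |ξ 1| * (Real.sqrt (qrad γ 1 ξ))⁻¹
            + γ * |ξ 1| * (Real.sqrt (qrad γ (-1) ξ))⁻¹) / 2 := by ring
      _ ≤ γ * (1 + 1) / 2 := by gcongr
      _ ≤ 2 * γ * r⁻¹ := by nlinarith
  · have k1 := deriv_term γ (ξ 1) _ hA (by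
      rw [← sq_abs, habs]; gcongr)
    have k2 := deriv_term γ (ξ 1) _ hB (by
      rw [← sq_abs, habs]; gcongr)
    have k := abs_comb _ _ _ _ ε2 hε2 k1 k2
    have b1 : (Real.sqrt (qrad γ 1 ξ))⁻¹ ≤ (γ * (r / 2))⁻¹ := by gcongr
    have b2 : (Real.sqrt (qrad γ (-1) ξ))⁻¹ ≤ (γ * (r / 2))⁻¹ := by gcongr
    have hD := cplx_deriv ((ε1 : ℂ) * (Complex.I / 2)) _ _ ξ (EuclideanSpace.single 1 1) hprod
    have hproj : (EuclideanSpace.proj 1 : E3 →L[ℝ] ℝ) (EuclideanSpace.single 1 1) = 1 := by simp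
    rw [aLam_eq]
    refine (congrArg norm hD).trans_le ?_
    rw [norm_coef _ _ hε1]
    simp only [add_apply, smul_apply, eA, eB, smul_eq_mul,
      Pi.add_apply, Function.comp_apply, hproj]
    calc _ = |γ ^ 2 * (((Real.sqrt (qrad γ 1 ξ))⁻¹
              - γ ^ 2 * ξ 1 ^ 2 * ((Real.sqrt (qrad γ 1 ξ))⁻¹) ^ 3)
            + ε2 * ((Real.sqrt (qrad γ (-1) ξ))⁻¹
              - γ ^ 2 * ξ 1 ^ 2 * ((Real.sqrt (qrad γ (-1) ξ))⁻¹) ^ 3))| / 2 := by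
          congr 2; field_simp; ring
      _ ≤ γ ^ 2 * ((γ * (r / 2))⁻¹ + (γ * (r / 2))⁻¹) / 2 := by
          rw [abs_mul, abs_of_pos (by positivity : 0 < γ ^ 2)]
          have := k.trans (add_le_add b1 b2)
          gcongr
      _ = 2 * γ * r⁻¹ := by field_simp; ring
end
end

section
/- Let 0 < r ≤ 1 ≤ R, let λ be one of the four phases λ_{ε₁,ε₂}, and for τ > 0 and x ∈ ℝ³ define the kernel K_λ(τ, x) = ∫_{ℝ³} e^{τ λ(ξ) + i x·ξ} Ψ_{r,R}(ξ) dξ. Then there exists a constant C > 0, depending only on γ̄ and ψ, such that for every τ > 0 one has sup_{x ∈ ℝ³} |K_λ(τ, x)| ≤ C R³ r^{−2} τ^{−1/2}. -/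
/- Common setup: the space ℝ³ (as a Euclidean space), Fourier transform,
   partial derivatives, Sobolev-type norms. -/

noncomputable section

open MeasureTheory Real Complex Filter ENNReal

/-- The oscillatory kernel `K_λ(τ,x) = ∫ e^{τλ(ξ) + i x·ξ} Ψ_{r,R}(ξ) dξ`. -/
def Kker (ψ : ℝ → ℝ) (r R γ ε1 ε2 τ : ℝ) (x : E3) : ℂ :=
  ∫ ξ : E3, Complex.exp ((τ : ℂ) * lamEV γ ε1 ε2 ξ +
      Complex.I * ((inner ℝ x ξ : ℝ) : ℂ)) * ((Psi ψ r R ξ : ℝ) : ℂ)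

open MeasureTheory Real Complex Filter ENNReal

/-- First derivative test, increasing derivative. -/
lemma vdc_first (φ φ1 φ2 : ℝ → ℝ) (a b δ : ℝ) (hab : a ≤ b) (hδ : 0 < δ)
    (h1 : ∀ t ∈ Set.Icc a b, HasDerivAt φ (φ1 t) t)
    (h2 : ∀ t ∈ Set.Icc a b, HasDerivAt φ1 (φ2 t) t)
    (hc : ContinuousOn φ2 (Set.Icc a b))
    (hpos : ∀ t ∈ Set.Icc a b, 0 ≤ φ2 t)
    (hlow : ∀ t ∈ Set.Icc a b, δ ≤ |φ1 t|) :
    ‖∫ t in a..b, cexp (I * (φ t : ℂ))‖ ≤ 4 / δ := by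
  have hu : Set.uIcc a b = Set.Icc a b := Set.uIcc_of_le hab
  have hne : ∀ t ∈ Set.Icc a b, φ1 t ≠ 0 := fun t ht h0 => by
    have := hlow t ht; rw [h0, abs_zero] at this; linarith
  have hc1 : ContinuousOn φ1 (Set.Icc a b) := fun t ht => (h2 t ht).continuousAt.continuousWithinAt
  have hc0 : ContinuousOn φ (Set.Icc a b) := fun t ht => (h1 t ht).continuousAt.continuousWithinAt
  have hcu : ContinuousOn (fun t => -φ2 t / (φ1 t)^2) (Set.Icc a b) :=
    (hc.neg).div (hc1.pow 2) (fun t ht => pow_ne_zero 2 (hne t ht))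
  have hce : ContinuousOn (fun t => cexp (I * (φ t : ℂ))) (Set.Icc a b) := by
    apply Continuous.comp_continuousOn Complex.continuous_exp
    exact continuousOn_const.mul (Complex.continuous_ofReal.comp_continuousOn hc0)
  have hinv : ∀ t ∈ Set.Icc a b, HasDerivAt (fun s => (φ1 s)⁻¹) (-φ2 t / (φ1 t)^2) t :=
    fun t ht => (h2 t ht).inv (hne t ht)
  have hexp : ∀ t ∈ Set.Icc a b, HasDerivAt (fun s => cexp (I * (φ s : ℂ)))
      (cexp (I * (φ t : ℂ)) * (I * (φ1 t : ℂ))) t := fun t ht =>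
    (((h1 t ht).ofReal_comp).const_mul I).cexp
  have key := intervalIntegral.integral_mul_deriv_eq_deriv_mul (a := a) (b := b)
    (u := fun s => (((φ1 s)⁻¹ : ℝ) : ℂ)) (u' := fun t => ((-φ2 t / (φ1 t)^2 : ℝ) : ℂ))
    (v := fun s => cexp (I * (φ s : ℂ))) (v' := fun t => cexp (I * (φ t : ℂ)) * (I * (φ1 t : ℂ)))
    (fun t ht => (hinv t (hu ▸ ht)).ofReal_comp) (fun t ht => hexp t (hu ▸ ht))
    (by
      apply ContinuousOn.intervalIntegrable; rw [hu]
      exact Complex.continuous_ofReal.comp_continuousOn hcu)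
    (by
      apply ContinuousOn.intervalIntegrable; rw [hu]
      exact hce.mul (continuousOn_const.mul (Complex.continuous_ofReal.comp_continuousOn hc1)))
  have e1 : ∫ t in a..b, (((φ1 t)⁻¹ : ℝ) : ℂ) * (cexp (I * (φ t : ℂ)) * (I * (φ1 t : ℂ)))
      = I * ∫ t in a..b, cexp (I * (φ t : ℂ)) := by
    rw [← intervalIntegral.integral_const_mul]
    apply intervalIntegral.integral_congr
    intro t ht
    have := hne t (hu ▸ ht)
    have h' : (φ1 t : ℂ) ≠ 0 := by exact_mod_cast this
    simp only
    push_cast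
    field_simp
  have nexp : ∀ t, ‖cexp (I * (φ t : ℂ))‖ = 1 := fun t => by
    rw [mul_comm]; exact Complex.norm_exp_ofReal_mul_I _
  have hinvle : ∀ t ∈ Set.Icc a b, |(φ1 t)⁻¹| ≤ 1/δ := fun t ht => by
    rw [abs_inv, ← one_div]; exact one_div_le_one_div_of_le hδ (hlow t ht)
  have hI : ‖∫ t in a..b, ((-φ2 t / (φ1 t)^2 : ℝ) : ℂ) * cexp (I * (φ t : ℂ))‖ ≤ 2/δ := by
    calc _ ≤ ∫ t in a..b, -(-φ2 t / (φ1 t)^2) := by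
          apply intervalIntegral.norm_integral_le_of_norm_le hab
          · filter_upwards with t ht
            rw [norm_mul, nexp, mul_one, Complex.norm_real, Real.norm_eq_abs, abs_of_nonpos]
            have := hpos t (Set.Ioc_subset_Icc_self ht)
            rw [neg_div]
            have : 0 ≤ φ2 t / (φ1 t)^2 := by positivity
            linarith
          · apply ContinuousOn.intervalIntegrable; rw [hu]; exact hcu.neg
      _ = -((φ1 b)⁻¹ - (φ1 a)⁻¹) := by
          rw [intervalIntegral.integral_neg]
          congr 1
          apply intervalIntegral.integral_eq_sub_of_hasDerivAt
          · intro t ht; exact hinv t (hu ▸ ht)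
          · apply ContinuousOn.intervalIntegrable; rw [hu]; exact hcu
      _ ≤ 2/δ := by
          have ha := abs_le.1 (hinvle a ⟨le_rfl, hab⟩)
          have hb := abs_le.1 (hinvle b ⟨hab, le_rfl⟩)
          have : 2/δ = 1/δ+1/δ := by ring
          linarith [ha.1, ha.2, hb.1, hb.2]
  rw [e1] at key
  have : ‖∫ t in a..b, cexp (I * (φ t : ℂ))‖ = ‖I * ∫ t in a..b, cexp (I * (φ t : ℂ))‖ := by
    rw [norm_mul, Complex.norm_I, one_mul]
  rw [this, key]
  refine (norm_sub_le _ _).trans ?_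
  have hb : ‖(((φ1 b)⁻¹ : ℝ) : ℂ) * cexp (I * (φ b : ℂ))‖ ≤ 1/δ := by
    rw [norm_mul, nexp, mul_one, Complex.norm_real]; exact hinvle b ⟨hab, le_rfl⟩
  have ha : ‖(((φ1 a)⁻¹ : ℝ) : ℂ) * cexp (I * (φ a : ℂ))‖ ≤ 1/δ := by
    rw [norm_mul, nexp, mul_one, Complex.norm_real]; exact hinvle a ⟨le_rfl, hab⟩
  have := norm_sub_le ((((φ1 b)⁻¹ : ℝ) : ℂ) * cexp (I * (φ b : ℂ))) ((((φ1 a)⁻¹ : ℝ) : ℂ) * cexp (I * (φ a : ℂ)))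
  have : 4/δ = 1/δ+1/δ + 2/δ := by ring
  linarith

lemma mono_of_deriv (f f' : ℝ → ℝ) (a b μ : ℝ)
    (h2 : ∀ t ∈ Set.Icc a b, HasDerivAt f (f' t) t)
    (hpos : ∀ t ∈ Set.Icc a b, μ ≤ f' t) {s t : ℝ} (hs : a ≤ s) (hst : s ≤ t) (ht : t ≤ b) :
    f s + μ * (t - s) ≤ f t := by
  have hm : MonotoneOn (fun x => f x - μ * x) (Set.Icc a b) := by
    apply monotoneOn_of_hasDerivWithinAt_nonneg (convex_Icc a b) (f' := fun x => f' x - μ)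
    · intro x hx
      exact ((h2 x hx).continuousAt.sub (by fun_prop)).continuousWithinAt
    · intro x hx
      have := ((h2 x (interior_subset hx)).sub ((hasDerivAt_id x).const_mul μ)).hasDerivWithinAt (s := interior (Set.Icc a b))
      rw [mul_one] at this
      exact this
    · intro x hx
      have := hpos x (interior_subset hx)
      linarith
  have := hm ⟨hs, hst.trans ht⟩ ⟨hs.trans hst, ht⟩ hst
  simp only at this
  linarith

/-- Van der Corput, second derivative bounded below. -/
lemma vdc_pos (φ φ1 φ2 : ℝ → ℝ) (a b μ : ℝ) (hab : a ≤ b) (hμ : 0 < μ)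
    (h1 : ∀ t ∈ Set.Icc a b, HasDerivAt φ (φ1 t) t)
    (h2 : ∀ t ∈ Set.Icc a b, HasDerivAt φ1 (φ2 t) t)
    (hc : ContinuousOn φ2 (Set.Icc a b))
    (hpos : ∀ t ∈ Set.Icc a b, μ ≤ φ2 t) :
    ‖∫ t in a..b, cexp (I * (φ t : ℂ))‖ ≤ 10 / √μ := by
  have hc1 : ContinuousOn φ1 (Set.Icc a b) := fun t ht => (h2 t ht).continuousAt.continuousWithinAt
  have hc0 : ContinuousOn φ (Set.Icc a b) := fun t ht => (h1 t ht).continuousAt.continuousWithinAt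
  have hmono := fun {s t : ℝ} => mono_of_deriv φ1 φ2 a b μ h2 hpos (s := s) (t := t)
  obtain ⟨c, hca, hcb, hcr, hcl⟩ : ∃ c, a ≤ c ∧ c ≤ b ∧ (∀ t, c < t → t ≤ b → μ * (t - c) ≤ φ1 t) ∧
      (∀ t, a ≤ t → t < c → φ1 t ≤ - (μ * (c - t))) := by
    by_cases hA : 0 ≤ φ1 a
    · refine ⟨a, le_rfl, hab, fun t h h' => ?_, fun t h h' => ?_⟩
      · linarith [hmono le_rfl h.le h']
      · linarith
    · by_cases hB : φ1 b ≤ 0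
      · refine ⟨b, hab, le_rfl, fun t h h' => ?_, fun t h h' => ?_⟩
        · linarith
        · linarith [hmono h h'.le le_rfl]
      · obtain ⟨c, ⟨hc1, hc2⟩, hc0⟩ := intermediate_value_Icc hab hc1
          (show (0:ℝ) ∈ Set.Icc (φ1 a) (φ1 b) from ⟨by linarith, by linarith⟩)
        refine ⟨c, hc1, hc2, fun t h h' => ?_, fun t h h' => ?_⟩
        · linarith [hmono hc1 h.le h']
        · linarith [hmono h h'.le hc2]
  set h : ℝ := 1 / √μ with hh
  have hsμ : 0 < √μ := Real.sqrt_pos.2 hμ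
  have hh0 : 0 < h := by positivity
  have hμh : μ * h = √μ := by
    rw [hh]; field_simp; exact (Real.sq_sqrt hμ.le).symm
  set c1 := max a (c - h)
  set c2 := min b (c + h)
  have k1 : a ≤ c1 := le_max_left _ _
  have k2 : c1 ≤ c := max_le hca (by linarith)
  have k3 : c ≤ c2 := le_min hcb (by linarith)
  have k4 : c2 ≤ b := min_le_left _ _
  have k5 : c - h ≤ c1 := le_max_right _ _
  have k6 : c2 ≤ c + h := min_le_right _ _
  have hce : ContinuousOn (fun t => cexp (I * (φ t : ℂ))) (Set.Icc a b) := by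
    apply Continuous.comp_continuousOn Complex.continuous_exp
    exact continuousOn_const.mul (Complex.continuous_ofReal.comp_continuousOn hc0)
  have hii : ∀ s t, a ≤ s → s ≤ t → t ≤ b →
      IntervalIntegrable (fun t => cexp (I * (φ t : ℂ))) volume s t := fun s t hs hst ht => by
    apply ContinuousOn.intervalIntegrable
    rw [Set.uIcc_of_le hst]
    exact hce.mono (Set.Icc_subset_Icc hs ht)
  have nexp : ∀ t, ‖cexp (I * (φ t : ℂ))‖ = 1 := fun t => by
    rw [mul_comm]; exact Complex.norm_exp_ofReal_mul_I _
  have m1 : ‖∫ t in a..c1, cexp (I * (φ t : ℂ))‖ ≤ 4 / √μ := by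
    by_cases hcase : a < c1
    · have hc1e : c1 = c - h := by
        rcases max_choice a (c - h) with h' | h'
        · exact absurd h' (ne_of_gt hcase)
        · exact h'
      have sub : ∀ t ∈ Set.Icc a c1, t ∈ Set.Icc a b := fun t ht => ⟨ht.1, by linarith [ht.2]⟩
      apply vdc_first φ φ1 φ2 a c1 (√μ) k1 hsμ (fun t ht => h1 t (sub t ht))
        (fun t ht => h2 t (sub t ht)) (hc.mono sub) (fun t ht => hμ.le.trans (hpos t (sub t ht)))
      intro t ht
      have := hcl t ht.1 (by linarith [ht.2])
      have h4 : μ * h ≤ μ * (c - t) := mul_le_mul_of_nonneg_left (by linarith [ht.2]) hμ.le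
      rw [abs_of_nonpos (by linarith)]
      linarith
    · have : c1 = a := le_antisymm (not_lt.1 hcase) k1
      rw [this]; simp only [intervalIntegral.integral_same, norm_zero]; positivity
  have m3 : ‖∫ t in c2..b, cexp (I * (φ t : ℂ))‖ ≤ 4 / √μ := by
    by_cases hcase : c2 < b
    · have hc1e : c2 = c + h := by
        rcases min_choice b (c + h) with h' | h'
        · exact absurd h' (ne_of_lt hcase)
        · exact h'
      have sub : ∀ t ∈ Set.Icc c2 b, t ∈ Set.Icc a b := fun t ht => ⟨by linarith [ht.1], ht.2⟩
      apply vdc_first φ φ1 φ2 c2 b (√μ) k4 hsμ (fun t ht => h1 t (sub t ht))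
        (fun t ht => h2 t (sub t ht)) (hc.mono sub) (fun t ht => hμ.le.trans (hpos t (sub t ht)))
      intro t ht
      have := hcr t (by linarith [ht.1]) ht.2
      have h4 : μ * h ≤ μ * (t - c) := mul_le_mul_of_nonneg_left (by linarith [ht.1]) hμ.le
      rw [abs_of_nonneg (by linarith)]
      linarith
    · have : c2 = b := le_antisymm k4 (not_lt.1 hcase)
      rw [this]; simp only [intervalIntegral.integral_same, norm_zero]; positivity
  have m2 : ‖∫ t in c1..c2, cexp (I * (φ t : ℂ))‖ ≤ 2 / √μ := by
    have := intervalIntegral.norm_integral_le_of_norm_le_const (a := c1) (b := c2) (C := 1)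
      (f := fun t => cexp (I * (φ t : ℂ))) (fun t _ => (nexp t).le)
    rw [abs_of_nonneg (by linarith)] at this
    have e : 2 / √μ = 2 * h := by rw [hh]; ring
    rw [e]; linarith
  have s1 := intervalIntegral.integral_add_adjacent_intervals (hii a c1 le_rfl k1 (by linarith))
    (hii c1 c2 k1 (by linarith) k4)
  have s2 := intervalIntegral.integral_add_adjacent_intervals (hii a c2 le_rfl (by linarith) k4)
    (hii c2 b (by linarith) k4 le_rfl)
  rw [← s2, ← s1]
  have e : 10 / √μ = 4 / √μ + 2 / √μ + 4 / √μ := by ring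
  rw [e]
  exact (norm_add_le _ _).trans (add_le_add ((norm_add_le _ _).trans (add_le_add m1 m2)) m3)

lemma vdc_neg (φ φ1 φ2 : ℝ → ℝ) (a b μ : ℝ) (hab : a ≤ b) (hμ : 0 < μ)
    (h1 : ∀ t ∈ Set.Icc a b, HasDerivAt φ (φ1 t) t)
    (h2 : ∀ t ∈ Set.Icc a b, HasDerivAt φ1 (φ2 t) t)
    (hc : ContinuousOn φ2 (Set.Icc a b))
    (hneg : ∀ t ∈ Set.Icc a b, φ2 t ≤ -μ) :
    ‖∫ t in a..b, cexp (I * (φ t : ℂ))‖ ≤ 10 / √μ := by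
  have h := vdc_pos (fun t => - φ t) (fun t => - φ1 t) (fun t => - φ2 t) a b μ hab hμ
    (fun t ht => (h1 t ht).neg) (fun t ht => (h2 t ht).neg) hc.neg
    (fun t ht => by linarith [hneg t ht])
  have e : ∫ t in a..b, cexp (I * ((-φ t : ℝ) : ℂ))
      = (starRingEnd ℂ) (∫ t in a..b, cexp (I * (φ t : ℂ))) := by
    rw [intervalIntegral.integral_of_le hab, intervalIntegral.integral_of_le hab, ← integral_conj]
    congr 1
    ext t
    rw [← Complex.exp_conj]
    simp
  rw [e, RCLike.norm_conj] at h
  exact h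

/-- Multiplying by a factor of bounded variation. -/
lemma amp_step (f : ℝ → ℂ) (hf : Continuous f) (k k' : ℝ → ℝ) (a b B V : ℝ)
    (hB0 : 0 ≤ B)
    (hB : ∀ s ∈ Set.Icc a b, ‖∫ t in a..s, f t‖ ≤ B)
    (hk : ∀ t ∈ Set.Icc a b, HasDerivAt k (k' t) t)
    (hk' : ContinuousOn k' (Set.Icc a b))
    (hk1 : ∀ t, |k t| ≤ 1)
    (hV : ∀ s ∈ Set.Icc a b, ∫ t in a..s, |k' t| ≤ V) :
    ∀ s ∈ Set.Icc a b, ‖∫ t in a..s, f t * (k t : ℂ)‖ ≤ B * (1 + V) := by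
  intro s hs
  have hu : Set.uIcc a s = Set.Icc a s := Set.uIcc_of_le hs.1
  have sub : ∀ t ∈ Set.Icc a s, t ∈ Set.Icc a b := fun t ht => ⟨ht.1, ht.2.trans hs.2⟩
  have hki : IntervalIntegrable k' volume a s := by
    apply ContinuousOn.intervalIntegrable; rw [hu]; exact hk'.mono sub
  have key := intervalIntegral.integral_mul_deriv_eq_deriv_mul (a := a) (b := s)
    (u := fun t => (k t : ℂ)) (u' := fun t => (k' t : ℂ))
    (v := fun x => ∫ t in a..x, f t) (v' := f)
    (fun t ht => (hk t (sub t (hu ▸ ht))).ofReal_comp)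
    (fun t ht => intervalIntegral.integral_hasDerivAt_right (hf.intervalIntegrable _ _)
      hf.aestronglyMeasurable.stronglyMeasurableAtFilter hf.continuousAt)
    ⟨hki.1.ofReal, hki.2.ofReal⟩ (hf.intervalIntegrable _ _)
  have e : ∫ t in a..s, f t * (k t : ℂ) = ∫ t in a..s, (k t : ℂ) * f t := by
    simp_rw [mul_comm]
  rw [e, key]
  simp only [intervalIntegral.integral_same, mul_zero, sub_zero]
  refine (norm_sub_le _ _).trans ?_
  have t1 : ‖(k s : ℂ) * ∫ t in a..s, f t‖ ≤ 1 * B := by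
    rw [norm_mul, Complex.norm_real]
    exact mul_le_mul (hk1 s) (hB s hs) (norm_nonneg _) zero_le_one
  have t2 : ‖∫ x in a..s, (k' x : ℂ) * ∫ t in a..x, f t‖ ≤ ∫ x in a..s, |k' x| * B := by
    apply intervalIntegral.norm_integral_le_of_norm_le hs.1
    · filter_upwards with x hx
      rw [norm_mul, Complex.norm_real]
      exact mul_le_mul_of_nonneg_left (hB x (sub x (Set.Ioc_subset_Icc_self hx))) (abs_nonneg _)
    · exact (hki.abs).mul_const B
  rw [intervalIntegral.integral_mul_const] at t2
  have t3 : (∫ x in a..s, |k' x|) * B ≤ V * B := mul_le_mul_of_nonneg_right (hV s hs) hB0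
  linarith

/-- Composition of a cutoff with a monotone map. -/
lemma cut_step (ψ : ℝ → ℝ) (hψ : ContDiff ℝ 1 ψ) (V : ℝ)
    (hV : ∀ u v, u ≤ v → ∫ t in u..v, |deriv ψ t| ≤ V)
    (hψ1 : ∀ x, |ψ x| ≤ 1)
    (f : ℝ → ℂ) (hf : Continuous f) (m m' : ℝ → ℝ) (a b B : ℝ)
    (hB0 : 0 ≤ B)
    (hB : ∀ s ∈ Set.Icc a b, ‖∫ t in a..s, f t‖ ≤ B)
    (hm : ∀ t ∈ Set.Icc a b, HasDerivAt m (m' t) t)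
    (hm' : ContinuousOn m' (Set.Icc a b))
    (hm0 : ∀ t ∈ Set.Icc a b, 0 ≤ m' t) :
    ∀ s ∈ Set.Icc a b, ‖∫ t in a..s, f t * (ψ (m t) : ℂ)‖ ≤ B * (1 + V) := by
  have hcm : ContinuousOn m (Set.Icc a b) := fun t ht => (hm t ht).continuousAt.continuousWithinAt
  have hdc : Continuous (deriv ψ) := hψ.continuous_deriv le_rfl
  apply amp_step f hf (fun t => ψ (m t)) (fun t => deriv ψ (m t) * m' t) a b B V hB0 hB
  · intro t ht
    exact ((hψ.differentiable one_ne_zero (m t)).hasDerivAt).comp t (hm t ht)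
  · exact (hdc.comp_continuousOn hcm).mul hm'
  · intro t; exact hψ1 _
  · intro s hs
    have hu : Set.uIcc a s = Set.Icc a s := Set.uIcc_of_le hs.1
    have sub : ∀ t ∈ Set.Icc a s, t ∈ Set.Icc a b := fun t ht => ⟨ht.1, ht.2.trans hs.2⟩
    have e : ∫ t in a..s, |deriv ψ (m t) * m' t| = ∫ t in a..s, ((fun x => |deriv ψ x|) ∘ m) t * m' t := by
      apply intervalIntegral.integral_congr
      intro t ht
      simp only [Function.comp, abs_mul]
      rw [abs_of_nonneg (hm0 t (sub t (hu ▸ ht)))]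
    rw [e, intervalIntegral.integral_comp_mul_deriv (fun t ht => hm t (sub t (hu ▸ ht)))
      (by rw [hu]; exact hm'.mono sub) hdc.abs]
    apply hV
    have := mono_of_deriv m m' a b 0 hm hm0 le_rfl hs.1 hs.2
    linarith

lemma quad_deriv1 (α β c t : ℝ) (hQ : 0 < α * t^2 + 2 * β * t + c) :
    HasDerivAt (fun s => √(α * s^2 + 2 * β * s + c)) ((α * t + β) / √(α * t^2 + 2 * β * t + c)) t := by
  have h : HasDerivAt (fun s : ℝ => α * s^2 + 2 * β * s + c) (2 * (α * t + β)) t := by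
    have := (((hasDerivAt_pow 2 t).const_mul α).add ((hasDerivAt_id t).const_mul (2 * β))).add_const c
    refine this.congr_deriv ?_
    simp; ring
  refine (h.sqrt hQ.ne').congr_deriv ?_
  rw [mul_div_mul_left _ _ two_ne_zero]

lemma quad_deriv2 (α β c t : ℝ) (hQ : 0 < α * t^2 + 2 * β * t + c) :
    HasDerivAt (fun s => (α * s + β) / √(α * s^2 + 2 * β * s + c))
      ((α * c - β^2) / √(α * t^2 + 2 * β * t + c)^3) t := by
  have h1 : HasDerivAt (fun s : ℝ => α * s + β) α t := by
    simpa using ((hasDerivAt_id t).const_mul α).add_const β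
  have hs : 0 < √(α * t^2 + 2 * β * t + c) := Real.sqrt_pos.2 hQ
  refine (h1.div (quad_deriv1 α β c t hQ) hs.ne').congr_deriv ?_
  have hsq := Real.sq_sqrt hQ.le
  generalize √(α * t^2 + 2 * β * t + c) = S at *
  have hc : c = S^2 - (α * t^2 + 2 * β * t) := by linarith
  rw [hc]
  field_simp
  ring

lemma phase_vdc (α β β' c e1 e2 τ p q a b ν : ℝ) (hab : a ≤ b) (hν : 0 < ν) (hτ : 0 < τ)
    (he1 : e1 = 1 ∨ e1 = -1) (he2 : e2 = 1 ∨ e2 = -1)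
    (hQ : ∀ t ∈ Set.Icc a b, 0 < α * t^2 + 2 * β * t + c)
    (hQ' : ∀ t ∈ Set.Icc a b, 0 < α * t^2 + 2 * β' * t + c)
    (hD : 0 ≤ α * c - β^2)
    (hlow : ∀ t ∈ Set.Icc a b, ν ≤ (α * c - β'^2) / √(α * t^2 + 2 * β' * t + c)^3
      - (α * c - β^2) / √(α * t^2 + 2 * β * t + c)^3) :
    ‖∫ t in a..b, cexp (I * ((τ * (e1 / 2 * (√(α * t^2 + 2 * β * t + c)
      + e2 * √(α * t^2 + 2 * β' * t + c))) + (p * t + q) : ℝ) : ℂ))‖ ≤ 10 / √(τ * ν / 2) := by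
  set f1 : ℝ → ℝ := fun t => τ * (e1 / 2 * ((α * t + β) / √(α * t^2 + 2 * β * t + c)
      + e2 * ((α * t + β') / √(α * t^2 + 2 * β' * t + c)))) + p
  set f2 : ℝ → ℝ := fun t => τ * (e1 / 2 * ((α * c - β^2) / √(α * t^2 + 2 * β * t + c)^3
      + e2 * ((α * c - β'^2) / √(α * t^2 + 2 * β' * t + c)^3)))
  have h1 : ∀ t ∈ Set.Icc a b, HasDerivAt (fun t => τ * (e1 / 2 * (√(α * t^2 + 2 * β * t + c)
      + e2 * √(α * t^2 + 2 * β' * t + c))) + (p * t + q)) (f1 t) t := by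
    intro t ht
    have hp : HasDerivAt (fun s : ℝ => p * s + q) p t := by
      simpa using ((hasDerivAt_id t).const_mul p).add_const q
    exact ((((quad_deriv1 α β c t (hQ t ht)).add
      ((quad_deriv1 α β' c t (hQ' t ht)).const_mul e2)).const_mul (e1/2)).const_mul τ).add hp
  have h2 : ∀ t ∈ Set.Icc a b, HasDerivAt f1 (f2 t) t := by
    intro t ht
    exact ((((quad_deriv2 α β c t (hQ t ht)).add
      ((quad_deriv2 α β' c t (hQ' t ht)).const_mul e2)).const_mul (e1/2)).const_mul τ).add_const p
  have hc : ContinuousOn f2 (Set.Icc a b) := by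
    have c1 : ContinuousOn (fun t => (α * c - β^2) / √(α * t^2 + 2 * β * t + c)^3) (Set.Icc a b) := by
      apply ContinuousOn.div continuousOn_const (by fun_prop)
      intro t ht
      exact pow_ne_zero 3 (Real.sqrt_pos.2 (hQ t ht)).ne'
    have c2 : ContinuousOn (fun t => (α * c - β'^2) / √(α * t^2 + 2 * β' * t + c)^3) (Set.Icc a b) := by
      apply ContinuousOn.div continuousOn_const (by fun_prop)
      intro t ht
      exact pow_ne_zero 3 (Real.sqrt_pos.2 (hQ' t ht)).ne'
    exact continuousOn_const.mul (continuousOn_const.mul (c1.add (continuousOn_const.mul c2)))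
  have hA : ∀ t ∈ Set.Icc a b, 0 ≤ (α * c - β^2) / √(α * t^2 + 2 * β * t + c)^3 := fun t _ =>
    div_nonneg hD (by positivity)
  have hμ : 0 < τ * ν / 2 := by positivity
  have hpos : (∀ t ∈ Set.Icc a b, τ * ν / 2 ≤ f2 t) ∨ (∀ t ∈ Set.Icc a b, f2 t ≤ -(τ * ν / 2)) := by
    rcases he1 with rfl | rfl <;> rcases he2 with rfl | rfl
    · left; intro t ht
      have := mul_le_mul_of_nonneg_left (hlow t ht) hτ.le
      have := mul_nonneg hτ.le (hA t ht)
      simp only [f2]; linarith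
    · right; intro t ht
      have := mul_le_mul_of_nonneg_left (hlow t ht) hτ.le
      have := mul_nonneg hτ.le (hA t ht)
      simp only [f2]; linarith
    · right; intro t ht
      have := mul_le_mul_of_nonneg_left (hlow t ht) hτ.le
      have := mul_nonneg hτ.le (hA t ht)
      simp only [f2]; linarith
    · left; intro t ht
      have := mul_le_mul_of_nonneg_left (hlow t ht) hτ.le
      have := mul_nonneg hτ.le (hA t ht)
      simp only [f2]; linarith
  rcases hpos with hp | hp
  · exact vdc_pos _ f1 f2 a b _ hab hμ h1 h2 hc hp
  · exact vdc_neg _ f1 f2 a b _ hab hμ h1 h2 hc hp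

/-- The integrand in coordinates. -/
noncomputable def Gk (ψ : ℝ → ℝ) (r R γ τ e1 e2 p1 p2 p3 x y z : ℝ) : ℂ :=
  cexp (I * ((τ * (e1 / 2 * (√(1 + γ^2 * (x^2 + y^2 + z^2) + 2 * γ * z)
    + e2 * √(1 + γ^2 * (x^2 + y^2 + z^2) - 2 * γ * z))) + (p1 * x + p2 * y + p3 * z) : ℝ) : ℂ)) *
  ((ψ (√(x^2 + y^2 + z^2) / R) * ((1 - ψ (√(x^2 + y^2) / r)) * (1 - ψ (|z| / r))) : ℝ) : ℂ)

lemma Gk_swap (ψ : ℝ → ℝ) (r R γ τ e1 e2 p1 p2 p3 x y z : ℝ) :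
    Gk ψ r R γ τ e1 e2 p1 p2 p3 x y z = Gk ψ r R γ τ e1 e2 p2 p1 p3 y x z := by
  unfold Gk
  rw [add_comm (x^2) (y^2), add_comm (p1 * x)]

lemma Gk_neg1 (ψ : ℝ → ℝ) (r R γ τ e1 e2 p1 p2 p3 x y z : ℝ) :
    Gk ψ r R γ τ e1 e2 p1 p2 p3 (-x) y z = Gk ψ r R γ τ e1 e2 (-p1) p2 p3 x y z := by
  unfold Gk
  rw [neg_sq, mul_neg, neg_mul]

lemma Gk_neg2 (ψ : ℝ → ℝ) (r R γ τ e1 e2 p1 p2 p3 x y z : ℝ) :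
    Gk ψ r R γ τ e1 e2 p1 p2 p3 x (-y) z = Gk ψ r R γ τ e1 e2 p1 (-p2) p3 x y z := by
  unfold Gk
  rw [neg_sq, mul_neg, neg_mul]

lemma Gk_neg3 (ψ : ℝ → ℝ) (r R γ τ e1 e2 p1 p2 p3 x y z : ℝ) (he2 : e2 = 1 ∨ e2 = -1) :
    Gk ψ r R γ τ e1 e2 p1 p2 p3 x y (-z) = Gk ψ r R γ τ (e1 * e2) e2 p1 p2 (-p3) x y z := by
  unfold Gk
  rw [neg_sq, abs_neg]
  congr 4
  rcases he2 with rfl | rfl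
  · ring_nf
  · ring_nf

lemma core1D (ψ : ℝ → ℝ) (hψ : ContDiff ℝ 1 ψ) (V : ℝ)
    (hV : ∀ u v, u ≤ v → ∫ t in u..v, |deriv ψ t| ≤ V) (hV0 : 0 ≤ V)
    (hψ0 : ∀ x, ψ x ∈ Set.Icc (0:ℝ) 1)
    (r R γ τ e1 e2 p1 p2 p3 : ℝ) (hr : 0 < r) (hR : 0 < R) (hγ : 0 < γ) (hτ : 0 < τ)
    (he1 : e1 = 1 ∨ e1 = -1) (he2 : e2 = 1 ∨ e2 = -1)
    (a y w lo hi ν : ℝ) (ha0 : 0 ≤ a) (hy : 0 < y) (hlo : 0 ≤ lo) (hlh : lo ≤ hi)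
    (hν : 0 < ν)
    (hlow : ∀ t ∈ Set.Icc lo hi, ν ≤
      γ^2 * ((1 + a^2) * γ^2 * w^2 + (γ * y + a)^2) / √(1 + γ^2 * ((y + a * t)^2 + w^2 + t^2) - 2 * γ * t)^3
      - γ^2 * ((1 + a^2) * γ^2 * w^2 + (γ * y - a)^2) / √(1 + γ^2 * ((y + a * t)^2 + w^2 + t^2) + 2 * γ * t)^3) :
    ‖∫ t in lo..hi, Gk ψ r R γ τ e1 e2 p1 p2 p3 (y + a * t) w t‖ ≤
      10 / √(τ * ν / 2) * (1 + V)^3 := by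
  set α := γ^2 * (1 + a^2) with hα
  set β := γ^2 * a * y + γ with hβ
  set β' := γ^2 * a * y - γ with hβ'
  set c := 1 + γ^2 * (y^2 + w^2) with hc
  have hα0 : 0 < α := by positivity
  have eQ : ∀ t, 1 + γ^2 * ((y + a * t)^2 + w^2 + t^2) + 2 * γ * t = α * t^2 + 2 * β * t + c := by
    intro t; rw [hα, hβ, hc]; ring
  have eQ' : ∀ t, 1 + γ^2 * ((y + a * t)^2 + w^2 + t^2) - 2 * γ * t = α * t^2 + 2 * β' * t + c := by
    intro t; rw [hα, hβ', hc]; ring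
  have eD : γ^2 * ((1 + a^2) * γ^2 * w^2 + (γ * y - a)^2) = α * c - β^2 := by
    rw [hα, hβ, hc]; ring
  have eD' : γ^2 * ((1 + a^2) * γ^2 * w^2 + (γ * y + a)^2) = α * c - β'^2 := by
    rw [hα, hβ', hc]; ring
  have hD : 0 ≤ α * c - β^2 := by rw [← eD]; positivity
  have hD' : 0 < α * c - β'^2 := by
    rw [← eD']
    have : 0 < γ * y + a := by positivity
    positivity
  have hQ : ∀ t ∈ Set.Icc lo hi, 0 < α * t^2 + 2 * β * t + c := by
    intro t ht
    have : 0 ≤ t := hlo.trans ht.1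
    rw [hβ, hc]
    positivity
  have hQ' : ∀ t ∈ Set.Icc lo hi, 0 < α * t^2 + 2 * β' * t + c := by
    intro t ht
    have : α * (α * t^2 + 2 * β' * t + c) = (α * t + β')^2 + (α * c - β'^2) := by ring
    have h2 : 0 < α * (α * t^2 + 2 * β' * t + c) := by rw [this]; positivity
    exact pos_of_mul_pos_right h2 hα0.le
  set f0 : ℝ → ℂ := fun t => cexp (I * ((τ * (e1 / 2 * (√(α * t^2 + 2 * β * t + c)
      + e2 * √(α * t^2 + 2 * β' * t + c))) + ((p1 * a + p3) * t + (p1 * y + p2 * w)) : ℝ) : ℂ)) with hf0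
  have hf0c : Continuous f0 := by
    rw [hf0]
    apply Complex.continuous_exp.comp
    apply continuous_const.mul
    apply Complex.continuous_ofReal.comp
    fun_prop
  have hB : ∀ s ∈ Set.Icc lo hi, ‖∫ t in lo..s, f0 t‖ ≤ 10 / √(τ * ν / 2) := by
    intro s hs
    have sub : ∀ t ∈ Set.Icc lo s, t ∈ Set.Icc lo hi := fun t ht => ⟨ht.1, ht.2.trans hs.2⟩
    apply phase_vdc α β β' c e1 e2 τ _ _ lo s ν hs.1 hν hτ he1 he2 (fun t ht => hQ t (sub t ht))
      (fun t ht => hQ' t (sub t ht)) hD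
    intro t ht
    have := hlow t (sub t ht)
    rw [eQ, eQ', eD, eD'] at this
    exact this
  have hψa : ∀ x, |ψ x| ≤ 1 := fun x => abs_le.2 ⟨by linarith [(hψ0 x).1], (hψ0 x).2⟩
  have hχ : ContDiff ℝ 1 (fun x => 1 - ψ x) := contDiff_const.sub hψ
  have hχa : ∀ x, |1 - ψ x| ≤ 1 := fun x => abs_le.2
    ⟨by linarith [(hψ0 x).2], by linarith [(hψ0 x).1]⟩
  have hχV : ∀ u v, u ≤ v → ∫ t in u..v, |deriv (fun x => 1 - ψ x) t| ≤ V := by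
    intro u v huv
    have : ∀ t, deriv (fun x => 1 - ψ x) t = - deriv ψ t := fun t => by
      rw [deriv_const_sub]
    simp_rw [this, abs_neg]
    exact hV u v huv
  have hψc : Continuous ψ := hψ.continuous
  set B := 10 / √(τ * ν / 2)
  have hB0 : 0 ≤ B := by positivity
  -- the first factor
  have hn : ∀ t ∈ Set.Icc lo hi, 0 < (1 + a^2) * t^2 + 2 * (a * y) * t + (y^2 + w^2) := by
    intro t ht
    have : 0 ≤ t := hlo.trans ht.1
    positivity
  have s1 := cut_step ψ hψ V hV hψa f0 hf0c
    (fun t => √((1 + a^2) * t^2 + 2 * (a * y) * t + (y^2 + w^2)) / R)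
    (fun t => ((1 + a^2) * t + a * y) / √((1 + a^2) * t^2 + 2 * (a * y) * t + (y^2 + w^2)) / R)
    lo hi B hB0 hB (fun t ht => (quad_deriv1 _ _ _ t (hn t ht)).div_const R)
    (by
      apply ContinuousOn.div_const
      apply ContinuousOn.div (by fun_prop) (by fun_prop)
      intro t ht; exact (Real.sqrt_pos.2 (hn t ht)).ne')
    (by
      intro t ht
      have : 0 ≤ t := hlo.trans ht.1
      positivity)
  have hh : ∀ t ∈ Set.Icc lo hi, 0 < a^2 * t^2 + 2 * (a * y) * t + (y^2 + w^2) := by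
    intro t ht
    have : 0 ≤ t := hlo.trans ht.1
    positivity
  have s2 := cut_step (fun x => 1 - ψ x) hχ V hχV hχa _ (by
      apply hf0c.mul
      apply Complex.continuous_ofReal.comp
      exact hψc.comp (by fun_prop))
    (fun t => √(a^2 * t^2 + 2 * (a * y) * t + (y^2 + w^2)) / r)
    (fun t => (a^2 * t + a * y) / √(a^2 * t^2 + 2 * (a * y) * t + (y^2 + w^2)) / r)
    lo hi _ (by positivity) s1 (fun t ht => (quad_deriv1 _ _ _ t (hh t ht)).div_const r)
    (by
      apply ContinuousOn.div_const
      apply ContinuousOn.div (by fun_prop) (by fun_prop)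
      intro t ht; exact (Real.sqrt_pos.2 (hh t ht)).ne')
    (by
      intro t ht
      have : 0 ≤ t := hlo.trans ht.1
      positivity)
  have s3 := cut_step (fun x => 1 - ψ x) hχ V hχV hχa _ (by
      apply Continuous.mul
      · apply hf0c.mul
        apply Complex.continuous_ofReal.comp
        exact hψc.comp (by fun_prop)
      · apply Complex.continuous_ofReal.comp
        exact continuous_const.sub (hψc.comp (by fun_prop)))
    (fun t => t / r) (fun _ => 1 / r)
    lo hi _ (by positivity) s2 (fun t ht => (hasDerivAt_id t).div_const r)
    continuousOn_const (fun _ _ => by positivity)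
  have fin := s3 hi ⟨hlh, le_rfl⟩
  have e3 : B * (1 + V)^3 = B * (1 + V) * (1 + V) * (1 + V) := by ring
  rw [e3]
  refine le_of_eq_of_le ?_ fin
  congr 1
  apply intervalIntegral.integral_congr
  intro t ht
  rw [Set.uIcc_of_le hlh] at ht
  have ht0 : 0 ≤ t := hlo.trans ht.1
  have en : (y + a * t)^2 + w^2 + t^2 = (1 + a^2) * t^2 + 2 * (a * y) * t + (y^2 + w^2) := by ring
  have eh : (y + a * t)^2 + w^2 = a^2 * t^2 + 2 * (a * y) * t + (y^2 + w^2) := by ring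
  simp only [Gk, hf0]
  rw [eQ, eQ', en, eh, abs_of_nonneg ht0]
  have ep : p1 * (y + a * t) + p2 * w + p3 * t = (p1 * a + p3) * t + (p1 * y + p2 * w) := by ring
  rw [ep]
  push_cast
  ring

lemma cube_diff (a b g t : ℝ) (hb : 0 < b) (hba : b ≤ a) (hg : 0 ≤ g * t) (h : a^2 - b^2 = 4 * (g * t)) :
    3 * (g * t) / a^5 ≤ 1 / b^3 - 1 / a^3 := by
  have ha : 0 < a := hb.trans_le hba
  have h1 : (a^3 - b^3) * (a + b) = 4 * (g * t) * (a^2 + a * b + b^2) := by rw [← h]; ring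
  have h2 : 3 * (g * t) * (a + b) ≤ a^3 - b^3 := by
    have : 3 * (g * t) * (a + b) * (a + b) ≤ (a^3 - b^3) * (a + b) := by
      rw [h1]
      nlinarith [mul_nonneg hg (sq_nonneg (a - b))]
    exact le_of_mul_le_mul_right this (by positivity)
  have h3 : 3 * (g * t) * b ≤ a^3 - b^3 := by nlinarith
  have h4 : b^2 ≤ a^2 := by nlinarith
  rw [div_sub_div _ _ (by positivity) (by positivity), div_le_div_iff₀ (by positivity) (by positivity)]
  have h5 : 3 * (g * t) * b * b^2 ≤ (a^3 - b^3) * a^2 := by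
    apply mul_le_mul h3 h4 (by positivity)
    nlinarith [mul_nonneg hg hb.le]
  have : 0 < a^3 := by positivity
  nlinarith [mul_le_mul_of_nonneg_right h5 this.le]

lemma sqrtA_le (γ R x w t : ℝ) (hγ : 0 < γ) (hR : 1 ≤ R) (hx : |x| ≤ 3 * R) (hw : |w| ≤ 2 * R)
    (ht0 : 0 ≤ t) (ht : t ≤ 2 * R) :
    √(1 + γ^2 * (x^2 + w^2 + t^2) + 2 * γ * t) ≤ (1 + 5 * γ) * R := by
  apply Real.sqrt_le_iff.2
  refine ⟨by positivity, ?_⟩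
  have h1 : x^2 ≤ 9 * R^2 := by nlinarith [abs_nonneg x, sq_abs x]
  have h2 : w^2 ≤ 4 * R^2 := by nlinarith [abs_nonneg w, sq_abs w]
  have h3 : t^2 ≤ 4 * R^2 := by nlinarith
  have h4 : γ^2 * (x^2 + w^2 + t^2) ≤ γ^2 * (17 * R^2) := by gcongr; linarith
  have h5 : γ * t ≤ γ * (2 * R^2) := by gcongr; nlinarith
  have h6 : 1 ≤ R^2 := by nlinarith
  have h7 : 0 ≤ γ^2 * R^2 := by positivity
  have h8 : 0 ≤ γ * R^2 := by positivity
  nlinarith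

lemma low2 (γ R y w t : ℝ) (hγ : 0 < γ) (hR : 1 ≤ R) (hy0 : 0 < y) (hy : y ≤ 2 * R) (hw : |w| ≤ 2 * R)
    (ht0 : 0 ≤ t) (ht : t ≤ 2 * R) :
    2 * γ^3 * y / ((1 + 5 * γ) * R)^3 ≤
      γ^2 * ((1 + (1/2)^2) * γ^2 * w^2 + (γ * y + 1/2)^2) / √(1 + γ^2 * ((y + 1/2 * t)^2 + w^2 + t^2) - 2 * γ * t)^3
      - γ^2 * ((1 + (1/2)^2) * γ^2 * w^2 + (γ * y - 1/2)^2) / √(1 + γ^2 * ((y + 1/2 * t)^2 + w^2 + t^2) + 2 * γ * t)^3 := by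
  have hA := sqrtA_le γ R (y + 1/2 * t) w t hγ hR (by rw [abs_of_nonneg (by positivity)]; linarith) hw ht0 ht
  have hBA : √(1 + γ^2 * ((y + 1/2 * t)^2 + w^2 + t^2) - 2 * γ * t) ≤
      √(1 + γ^2 * ((y + 1/2 * t)^2 + w^2 + t^2) + 2 * γ * t) := by
    apply Real.sqrt_le_sqrt
    have : 0 ≤ γ * t := by positivity
    linarith
  have hB : 0 < √(1 + γ^2 * ((y + 1/2 * t)^2 + w^2 + t^2) - 2 * γ * t) := by
    apply Real.sqrt_pos.2
    have : 0 < (y + 1/2 * t)^2 := by positivity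
    have h3 : 0 < γ^2 * (y + 1/2 * t)^2 := by positivity
    nlinarith [sq_nonneg (γ * t - 1), mul_nonneg (sq_nonneg γ) (sq_nonneg w)]
  generalize √(1 + γ^2 * ((y + 1/2 * t)^2 + w^2 + t^2) - 2 * γ * t) = b at *
  generalize √(1 + γ^2 * ((y + 1/2 * t)^2 + w^2 + t^2) + 2 * γ * t) = a at *
  have ha : 0 < a := hB.trans_le hBA
  have e : 2 * γ^3 * y / a^3 = γ^2 * ((1 + (1/2)^2) * γ^2 * w^2 + (γ * y + 1/2)^2) / a^3
    - γ^2 * ((1 + (1/2)^2) * γ^2 * w^2 + (γ * y - 1/2)^2) / a^3 := by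
    rw [← sub_div]; congr 1; ring
  calc 2 * γ^3 * y / ((1 + 5 * γ) * R)^3 ≤ 2 * γ^3 * y / a^3 := by gcongr
    _ ≤ _ := by
      rw [e]; gcongr

lemma low1 (γ R y w t lo : ℝ) (hγ : 0 < γ) (hR : 1 ≤ R) (hy0 : 0 < y) (hy : y ≤ 2 * R) (hw : |w| ≤ 2 * R)
    (ht0 : 0 ≤ lo) (hlt : lo ≤ t) (ht : t ≤ 2 * R) :
    3 * γ^5 * (y^2 + w^2) * lo / ((1 + 5 * γ) * R)^5 ≤
      γ^2 * ((1 + 0^2) * γ^2 * w^2 + (γ * y + 0)^2) / √(1 + γ^2 * ((y + 0 * t)^2 + w^2 + t^2) - 2 * γ * t)^3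
      - γ^2 * ((1 + 0^2) * γ^2 * w^2 + (γ * y - 0)^2) / √(1 + γ^2 * ((y + 0 * t)^2 + w^2 + t^2) + 2 * γ * t)^3 := by
  have ht0' : 0 ≤ t := ht0.trans hlt
  have e0 : y + 0 * t = y := by ring
  rw [e0]
  have hA := sqrtA_le γ R y w t hγ hR (by rw [abs_of_nonneg (by positivity)]; linarith) hw ht0' ht
  have hgt : 0 ≤ γ * t := by positivity
  have hBA : √(1 + γ^2 * (y^2 + w^2 + t^2) - 2 * γ * t) ≤
      √(1 + γ^2 * (y^2 + w^2 + t^2) + 2 * γ * t) := by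
    apply Real.sqrt_le_sqrt
    linarith
  have hB0 : 0 < 1 + γ^2 * (y^2 + w^2 + t^2) - 2 * γ * t := by
    have h3 : 0 < γ^2 * y^2 := by positivity
    nlinarith [sq_nonneg (γ * t - 1), mul_nonneg (sq_nonneg γ) (sq_nonneg w)]
  have hB := Real.sqrt_pos.2 hB0
  have hsq : √(1 + γ^2 * (y^2 + w^2 + t^2) + 2 * γ * t)^2 - √(1 + γ^2 * (y^2 + w^2 + t^2) - 2 * γ * t)^2
      = 4 * (γ * t) := by
    rw [Real.sq_sqrt hB0.le, Real.sq_sqrt (by linarith)]; ring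
  generalize √(1 + γ^2 * (y^2 + w^2 + t^2) - 2 * γ * t) = b at *
  generalize √(1 + γ^2 * (y^2 + w^2 + t^2) + 2 * γ * t) = a at *
  have ha : 0 < a := hB.trans_le hBA
  have key := cube_diff a b γ t hB hBA hgt hsq
  have hD : 0 ≤ γ^4 * (y^2 + w^2) := by positivity
  calc 3 * γ^5 * (y^2 + w^2) * lo / ((1 + 5 * γ) * R)^5 ≤ 3 * γ^5 * (y^2 + w^2) * t / a^5 := by gcongr
    _ = γ^4 * (y^2 + w^2) * (3 * (γ * t) / a^5) := by ring
    _ ≤ γ^4 * (y^2 + w^2) * (1 / b^3 - 1 / a^3) := mul_le_mul_of_nonneg_left key hD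
    _ = _ := by ring

/-- Vanishing of the integrand. -/
lemma Gk_zero (ψ : ℝ → ℝ) (hψ2 : ∀ x, (2:ℝ) ≤ x → ψ x = 0)
    (r R γ τ e1 e2 p1 p2 p3 x y z : ℝ) (hR : 0 < R) (h : 2 * R ≤ |x| ∨ 2 * R ≤ |y| ∨ 2 * R ≤ |z|) :
    Gk ψ r R γ τ e1 e2 p1 p2 p3 x y z = 0 := by
  have : ψ (√(x^2 + y^2 + z^2) / R) = 0 := by
    apply hψ2
    rw [le_div_iff₀ hR]
    rcases h with h | h | h
    · refine h.trans (Real.abs_le_sqrt ?_); nlinarith [sq_nonneg y, sq_nonneg z]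
    · refine h.trans (Real.abs_le_sqrt ?_); nlinarith [sq_nonneg x, sq_nonneg z]
    · refine h.trans (Real.abs_le_sqrt ?_); nlinarith [sq_nonneg y, sq_nonneg x]
  simp [Gk, this]

lemma Gk_zero_z (ψ : ℝ → ℝ) (hψ2 : ∀ x, x ≤ (1:ℝ) → ψ x = 1)
    (r R γ τ e1 e2 p1 p2 p3 x y : ℝ) :
    Gk ψ r R γ τ e1 e2 p1 p2 p3 x y 0 = 0 := by
  have : ψ (|0| / r) = 1 := by
    apply hψ2; simp
  simp [Gk, hψ2]

lemma Gk_norm_le (ψ : ℝ → ℝ) (hψ0 : ∀ x, ψ x ∈ Set.Icc (0:ℝ) 1)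
    (r R γ τ e1 e2 p1 p2 p3 x y z : ℝ) :
    ‖Gk ψ r R γ τ e1 e2 p1 p2 p3 x y z‖ ≤ 1 := by
  unfold Gk
  rw [norm_mul, mul_comm I, Complex.norm_exp_ofReal_mul_I, one_mul, Complex.norm_real, Real.norm_eq_abs]
  have a1 := hψ0 (√(x^2 + y^2 + z^2) / R)
  have a2 := hψ0 (√(x^2 + y^2) / r)
  have a3 := hψ0 (|z| / r)
  rw [abs_mul, abs_mul]
  have b1 : |ψ (√(x^2 + y^2 + z^2) / R)| ≤ 1 := abs_le.2 ⟨by linarith [a1.1], a1.2⟩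
  have b2 : |1 - ψ (√(x^2 + y^2) / r)| ≤ 1 := abs_le.2 ⟨by linarith [a2.2], by linarith [a2.1]⟩
  have b3 : |1 - ψ (|z| / r)| ≤ 1 := abs_le.2 ⟨by linarith [a3.2], by linarith [a3.1]⟩
  have := mul_le_one₀ b2 (abs_nonneg _) b3
  exact mul_le_one₀ b1 (by positivity) this

lemma Gk_cont (ψ : ℝ → ℝ) (hψ : Continuous ψ) (r R γ τ e1 e2 p1 p2 p3 : ℝ)
    {X : Type*} [TopologicalSpace X] (f g h : X → ℝ) (hf : Continuous f) (hg : Continuous g)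
    (hh : Continuous h) :
    Continuous (fun u => Gk ψ r R γ τ e1 e2 p1 p2 p3 (f u) (g u) (h u)) := by
  unfold Gk
  apply Continuous.mul
  · apply Complex.continuous_exp.comp
    apply continuous_const.mul
    apply Complex.continuous_ofReal.comp
    fun_prop
  · apply Complex.continuous_ofReal.comp
    apply Continuous.mul
    · exact hψ.comp (by fun_prop)
    · exact (continuous_const.sub (hψ.comp (by fun_prop))).mul
        (continuous_const.sub (hψ.comp (by fun_prop)))

/-- Data common to all the one-dimensional estimates. -/
structure Dat (ψ : ℝ → ℝ) (V r R γ τ : ℝ) : Prop where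
  hψ : ContDiff ℝ 1 ψ
  hV : ∀ u v, u ≤ v → ∫ t in u..v, |deriv ψ t| ≤ V
  hV0 : 0 ≤ V
  hψ0 : ∀ x, ψ x ∈ Set.Icc (0:ℝ) 1
  hψ1 : ∀ x, x ≤ (1:ℝ) → ψ x = 1
  hψ2 : ∀ x, (2:ℝ) ≤ x → ψ x = 0
  hr : 0 < r
  hR : 1 ≤ R
  hγ : 0 < γ
  hτ : 0 < τ

lemma Gk_int_z {ψ : ℝ → ℝ} {V r R γ τ : ℝ} (d : Dat ψ V r R γ τ) (e1 e2 p1 p2 p3 y w a : ℝ) :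
    Integrable (fun t => Gk ψ r R γ τ e1 e2 p1 p2 p3 (y + a * t) w t) := by
  apply Continuous.integrable_of_hasCompactSupport
  · exact Gk_cont ψ d.hψ.continuous _ _ _ _ _ _ _ _ _ _ _ _ (by fun_prop) (by fun_prop) (by fun_prop)
  · apply HasCompactSupport.intro (K := Set.Icc (-(2 * R)) (2 * R)) isCompact_Icc
    intro t ht
    apply Gk_zero ψ d.hψ2 _ _ _ _ _ _ _ _ _ _ _ _ (by linarith [d.hR])
    right; right
    by_contra hcon
    rw [not_le, abs_lt] at hcon
    exact ht ⟨hcon.1.le, hcon.2.le⟩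

lemma half1 {ψ : ℝ → ℝ} {V r R γ τ : ℝ} (d : Dat ψ V r R γ τ) (e1 e2 p1 p2 p3 y w m : ℝ)
    (he1 : e1 = 1 ∨ e1 = -1) (he2 : e2 = 1 ∨ e2 = -1) (hy : 0 < y) (hm : 0 < m) (hym : y ≤ m)
    (hwm : |w| ≤ m) :
    ‖∫ t in Set.Ioi m, Gk ψ r R γ τ e1 e2 p1 p2 p3 y w t‖ ≤
      10 / √(τ * (3 * γ^5 * (y^2 + w^2) * m / ((1 + 5 * γ) * R)^5) / 2) * (1 + V)^3 := by
  have hR := d.hR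
  have hγ := d.hγ
  have hτ := d.hτ
  have hV0 := d.hV0
  by_cases hcase : m ≤ 2 * R
  · have e : ∫ t in Set.Ioi m, Gk ψ r R γ τ e1 e2 p1 p2 p3 y w t
        = ∫ t in m..(2 * R), Gk ψ r R γ τ e1 e2 p1 p2 p3 (y + 0 * t) w t := by
      rw [intervalIntegral.integral_of_le hcase]
      simp only [zero_mul, add_zero]
      apply setIntegral_eq_of_subset_of_forall_sdiff_eq_zero measurableSet_Ioi Set.Ioc_subset_Ioi_self
      intro t ht
      apply Gk_zero ψ d.hψ2 _ _ _ _ _ _ _ _ _ _ _ _ (by linarith [d.hR])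
      right; right
      have h1 : m < t := ht.1
      have : ¬ (t ≤ 2 * R) := fun h => ht.2 ⟨h1, h⟩
      rw [abs_of_nonneg (by linarith)]; linarith
    rw [e]
    apply core1D ψ d.hψ V d.hV d.hV0 d.hψ0 r R γ τ e1 e2 p1 p2 p3 d.hr (by linarith) d.hγ d.hτ he1 he2
      0 y w m (2 * R) _ le_rfl hy hm.le hcase (by positivity)
    intro t ht
    exact low1 γ R y w t m d.hγ d.hR hy (by linarith) (by linarith) hm.le ht.1 ht.2
  · have : ∫ t in Set.Ioi m, Gk ψ r R γ τ e1 e2 p1 p2 p3 y w t = 0 := by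
      apply setIntegral_eq_zero_of_forall_eq_zero
      intro t ht
      apply Gk_zero ψ d.hψ2 _ _ _ _ _ _ _ _ _ _ _ _ (by linarith [d.hR])
      right; right
      have h1 : m < t := ht
      rw [abs_of_nonneg (by linarith)]; linarith
    rw [this, norm_zero]; positivity

lemma half1' {ψ : ℝ → ℝ} {V r R γ τ : ℝ} (d : Dat ψ V r R γ τ) (e1 e2 p1 p2 p3 y w m : ℝ)
    (he1 : e1 = 1 ∨ e1 = -1) (he2 : e2 = 1 ∨ e2 = -1) (hy : y ≠ 0) (hm : 0 < m) (hym : |y| ≤ m)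
    (hwm : |w| ≤ m) :
    ‖∫ t in Set.Ioi m, Gk ψ r R γ τ e1 e2 p1 p2 p3 y w t‖ ≤
      10 / √(τ * (3 * γ^5 * (y^2 + w^2) * m / ((1 + 5 * γ) * R)^5) / 2) * (1 + V)^3 := by
  rcases lt_or_gt_of_ne hy with h | h
  · have := half1 d e1 e2 (-p1) p2 p3 (-y) w m he1 he2 (by linarith) hm (by rwa [abs_of_neg h] at hym) hwm
    simp_rw [← Gk_neg1, neg_neg, neg_sq] at this
    exact this
  · exact half1 d e1 e2 p1 p2 p3 y w m he1 he2 h hm (by rwa [abs_of_pos h] at hym) hwm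

lemma sgn_mul {a b : ℝ} (ha : a = 1 ∨ a = -1) (hb : b = 1 ∨ b = -1) : a * b = 1 ∨ a * b = -1 := by
  rcases ha with rfl | rfl <;> rcases hb with rfl | rfl <;> simp

/-- One dimensional estimate on the first piece. -/
lemma piece1 {ψ : ℝ → ℝ} {V r R γ τ : ℝ} (d : Dat ψ V r R γ τ) (e1 e2 p1 p2 p3 y w : ℝ)
    (he1 : e1 = 1 ∨ e1 = -1) (he2 : e2 = 1 ∨ e2 = -1) (hy : y ≠ 0) (hw : w ≠ 0) :
    ‖∫ t in {t : ℝ | |y| ≤ |t| ∧ |w| ≤ |t|}, Gk ψ r R γ τ e1 e2 p1 p2 p3 y w t‖ ≤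
      (20 * (1 + V)^3 / √(τ * (3 * γ^5 / ((1 + 5 * γ) * R)^5) / 2)) *
        (|y| ^ (-(3/4) : ℝ) * |w| ^ (-(3/4) : ℝ)) := by
  have hR := d.hR
  have hγ := d.hγ
  have hτ := d.hτ
  have hV0 := d.hV0
  set m := max |y| |w| with hm
  have hy' : 0 < |y| := abs_pos.2 hy
  have hw' : 0 < |w| := abs_pos.2 hw
  have hym : |y| ≤ m := le_max_left _ _
  have hwm : |w| ≤ m := le_max_right _ _
  have hm0 : 0 < m := hy'.trans_le hym
  have hset : {t : ℝ | |y| ≤ |t| ∧ |w| ≤ |t|} = Set.Ici m ∪ Set.Iic (-m) := by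
    ext t
    simp only [Set.mem_ofPred_eq, Set.mem_union, Set.mem_Ici, Set.mem_Iic]
    rw [← max_le_iff, ← hm, le_abs]
    constructor
    · rintro (h | h); exacts [Or.inl h, Or.inr (by linarith)]
    · rintro (h | h); exacts [Or.inl h, Or.inr (by linarith)]
  have hIntg := Gk_int_z d e1 e2 p1 p2 p3 y w 0
  simp only [zero_mul, add_zero] at hIntg
  rw [hset, setIntegral_union (by
    rw [Set.disjoint_left]
    intro t ht ht'
    simp only [Set.mem_Ici, Set.mem_Iic] at ht ht'
    linarith) measurableSet_Iic hIntg.integrableOn hIntg.integrableOn, integral_Ici_eq_integral_Ioi]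
  have e2' : ∫ t in Set.Iic (-m), Gk ψ r R γ τ e1 e2 p1 p2 p3 y w t
      = ∫ t in Set.Ioi m, Gk ψ r R γ τ (e1 * e2) e2 p1 p2 (-p3) y w t := by
    simp_rw [← Gk_neg3 ψ r R γ τ e1 e2 p1 p2 p3 y w _ he2]
    have := integral_comp_neg_Ioi m (fun t => Gk ψ r R γ τ e1 e2 p1 p2 p3 y w t)
    rw [this]
  rw [e2']
  have b1 := half1' d e1 e2 p1 p2 p3 y w m he1 he2 hy hm0 hym hwm
  have b2 := half1' d (e1 * e2) e2 p1 p2 (-p3) y w m (sgn_mul he1 he2) he2 hy hm0 hym hwm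
  refine (norm_add_le _ _).trans ((add_le_add b1 b2).trans ?_)
  set κ := τ * (3 * γ^5 / ((1 + 5 * γ) * R)^5) / 2 with hκ
  have hκ0 : 0 < κ := by positivity
  have e3 : τ * (3 * γ^5 * (y^2 + w^2) * m / ((1 + 5 * γ) * R)^5) / 2 = κ * ((y^2 + w^2) * m) := by
    rw [hκ]; ring
  rw [e3, Real.sqrt_mul hκ0.le]
  have h4 : |y| ^ ((3/4) : ℝ) * |w| ^ ((3/4) : ℝ) ≤ √((y^2 + w^2) * m) := by
    apply Real.le_sqrt_of_sq_le
    have hm2 : m^2 ≤ y^2 + w^2 := by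
      rcases max_choice |y| |w| with h | h
      · rw [hm, h, sq_abs]; nlinarith [sq_nonneg w]
      · rw [hm, h, sq_abs]; nlinarith [sq_nonneg y]
    have h5 : |y| ^ ((3/4) : ℝ) ≤ m ^ ((3/4) : ℝ) := Real.rpow_le_rpow hy'.le hym (by norm_num)
    have h6 : |w| ^ ((3/4) : ℝ) ≤ m ^ ((3/4) : ℝ) := Real.rpow_le_rpow hw'.le hwm (by norm_num)
    have h7 : (m ^ ((3/4) : ℝ) * m ^ ((3/4) : ℝ))^2 = m^3 := by
      rw [← Real.rpow_add hm0, ← Real.rpow_natCast, ← Real.rpow_mul hm0.le, ← Real.rpow_natCast]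
      norm_num
    calc (|y| ^ ((3/4) : ℝ) * |w| ^ ((3/4) : ℝ))^2 ≤ (m ^ ((3/4) : ℝ) * m ^ ((3/4) : ℝ))^2 := by gcongr
      _ = m^2 * m := by rw [h7]; ring
      _ ≤ (y^2 + w^2) * m := by gcongr
  rw [Real.rpow_neg hy'.le, Real.rpow_neg hw'.le]
  have hp : 0 < |y| ^ ((3/4) : ℝ) * |w| ^ ((3/4) : ℝ) := by positivity
  have hsκ : 0 < √κ := Real.sqrt_pos.2 hκ0
  calc 10 / (√κ * √((y^2 + w^2) * m)) * (1 + V)^3 + 10 / (√κ * √((y^2 + w^2) * m)) * (1 + V)^3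
      = 20 * (1 + V)^3 / √κ * (1 / √((y^2 + w^2) * m)) := by
        have : 0 < √((y^2 + w^2) * m) := hp.trans_le h4
        field_simp; ring
    _ ≤ 20 * (1 + V)^3 / √κ * (1 / (|y| ^ ((3/4) : ℝ) * |w| ^ ((3/4) : ℝ))) := by gcongr
    _ = _ := by rw [one_div, mul_inv]

/-- One dimensional estimate on the second piece, positive case. -/
lemma piece2pos {ψ : ℝ → ℝ} {V r R γ τ : ℝ} (d : Dat ψ V r R γ τ) (e1 e2 p1 p2 p3 y w l : ℝ)
    (he1 : e1 = 1 ∨ e1 = -1) (he2 : e2 = 1 ∨ e2 = -1) (hy : 0 < y) (hl : 0 ≤ l) :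
    ‖∫ t, Set.indicator {t : ℝ | |t| < |y + 1/2 * t| ∧ l ≤ |t| ∧ 0 < (y + 1/2 * t) * t}
        (fun t => Gk ψ r R γ τ e1 e2 p1 p2 p3 (y + 1/2 * t) w t) t‖ ≤
      10 / √(τ * (2 * γ^3 * y / ((1 + 5 * γ) * R)^3) / 2) * (1 + V)^3 := by
  have hR := d.hR
  have hγ := d.hγ
  have hτ := d.hτ
  have hV0 := d.hV0
  have hS : ∀ t : ℝ, (|t| < |y + 1/2 * t| ∧ l ≤ |t| ∧ 0 < (y + 1/2 * t) * t) ↔ (0 < t ∧ l ≤ t ∧ t < 2 * y) := by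
    intro t
    constructor
    · rintro ⟨h1, h2, h3⟩
      have ht : 0 < t := by
        rcases pos_and_pos_or_neg_and_neg_of_mul_pos h3 with h | h
        · exact h.2
        · rw [abs_of_neg h.2, abs_of_neg h.1] at h1; linarith
      rw [abs_of_pos ht, abs_of_pos (by linarith)] at h1
      rw [abs_of_pos ht] at h2
      exact ⟨ht, h2, by linarith⟩
    · rintro ⟨h1, h2, h3⟩
      rw [abs_of_pos h1, abs_of_pos (by linarith)]
      exact ⟨by linarith, h2, by positivity⟩
  set hi := min (2 * y) (2 * R) with hhi
  by_cases hcase : l ≤ hi ∧ y ≤ 2 * R ∧ |w| ≤ 2 * R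
  · obtain ⟨c1, c2, c3⟩ := hcase
    have e : ∫ t, Set.indicator {t : ℝ | |t| < |y + 1/2 * t| ∧ l ≤ |t| ∧ 0 < (y + 1/2 * t) * t}
        (fun t => Gk ψ r R γ τ e1 e2 p1 p2 p3 (y + 1/2 * t) w t) t
        = ∫ t in l..hi, Gk ψ r R γ τ e1 e2 p1 p2 p3 (y + 1/2 * t) w t := by
      rw [intervalIntegral.integral_of_le c1, ← integral_indicator measurableSet_Ioc]
      apply integral_congr_ae
      filter_upwards [Measure.ae_ne volume l, Measure.ae_ne volume (2 * y)] with t h1 h2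
      by_cases ht : t ∈ Set.Ioc l hi
      · have h3 : t ≤ 2 * y := ht.2.trans (min_le_left _ _)
        rw [Set.indicator_of_mem ht, Set.indicator_of_mem]
        rw [Set.mem_ofPred_eq, hS]
        exact ⟨hl.trans_lt ht.1, ht.1.le, lt_of_le_of_ne h3 h2⟩
      · rw [Set.indicator_of_notMem ht]
        by_cases ht' : t ∈ {t : ℝ | |t| < |y + 1/2 * t| ∧ l ≤ |t| ∧ 0 < (y + 1/2 * t) * t}
        · rw [Set.indicator_of_mem ht']
          rw [Set.mem_ofPred_eq, hS] at ht'
          apply Gk_zero ψ d.hψ2 _ _ _ _ _ _ _ _ _ _ _ _ (by linarith [d.hR])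
          right; right
          rw [abs_of_pos ht'.1]
          by_contra hcon
          exact ht ⟨lt_of_le_of_ne ht'.2.1 (Ne.symm h1), le_min ht'.2.2.le (not_le.1 hcon).le⟩
        · rw [Set.indicator_of_notMem ht']
    rw [e]
    apply core1D ψ d.hψ V d.hV d.hV0 d.hψ0 r R γ τ e1 e2 p1 p2 p3 d.hr (by linarith) d.hγ d.hτ he1 he2
      (1/2) y w l hi _ (by norm_num) hy hl c1 (by positivity)
    intro t ht
    exact low2 γ R y w t d.hγ d.hR hy c2 c3 (hl.trans ht.1) (ht.2.trans (min_le_right _ _))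
  · have : ∫ t, Set.indicator {t : ℝ | |t| < |y + 1/2 * t| ∧ l ≤ |t| ∧ 0 < (y + 1/2 * t) * t}
        (fun t => Gk ψ r R γ τ e1 e2 p1 p2 p3 (y + 1/2 * t) w t) t = 0 := by
      apply integral_eq_zero_of_ae
      filter_upwards with t
      by_cases ht' : t ∈ {t : ℝ | |t| < |y + 1/2 * t| ∧ l ≤ |t| ∧ 0 < (y + 1/2 * t) * t}
      · rw [Set.indicator_of_mem ht']
        rw [Set.mem_ofPred_eq, hS] at ht'
        apply Gk_zero ψ d.hψ2 _ _ _ _ _ _ _ _ _ _ _ _ (by linarith [d.hR])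
        by_contra! hcon
        obtain ⟨k1, k2, k3⟩ := hcon
        rw [abs_of_pos (by linarith)] at k1
        rw [abs_of_pos ht'.1] at k3
        exact hcase ⟨le_min (by linarith) (by linarith), by linarith, k2.le⟩
      · rw [Set.indicator_of_notMem ht']; rfl
    rw [this, norm_zero]; positivity

/-- One dimensional estimate on the second piece. -/
lemma piece2 {ψ : ℝ → ℝ} {V r R γ τ : ℝ} (d : Dat ψ V r R γ τ) (e1 e2 p1 p2 p3 y w l σ : ℝ)
    (he1 : e1 = 1 ∨ e1 = -1) (he2 : e2 = 1 ∨ e2 = -1) (hσ : σ = 1/2 ∨ σ = -1/2)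
    (hy : y ≠ 0) (hl : 0 ≤ l) :
    ‖∫ t, Set.indicator {t : ℝ | |t| < |y + σ * t| ∧ l ≤ |t| ∧ 0 < σ * ((y + σ * t) * t)}
        (fun t => Gk ψ r R γ τ e1 e2 p1 p2 p3 (y + σ * t) w t) t‖ ≤
      (10 * (1 + V)^3 / √(τ * (2 * γ^3 / ((1 + 5 * γ) * R)^3) / 2)) * |y| ^ (-(1/2) : ℝ) := by
  have hR := d.hR
  have hγ := d.hγ
  have hτ := d.hτ
  have hV0 := d.hV0
  have key : ‖∫ t, Set.indicator {t : ℝ | |t| < |y + σ * t| ∧ l ≤ |t| ∧ 0 < σ * ((y + σ * t) * t)}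
        (fun t => Gk ψ r R γ τ e1 e2 p1 p2 p3 (y + σ * t) w t) t‖ ≤
        10 / √(τ * (2 * γ^3 * |y| / ((1 + 5 * γ) * R)^3) / 2) * (1 + V)^3 := by
    rcases hσ with rfl | rfl <;> rcases lt_or_gt_of_ne hy with hy | hy
    · have := piece2pos d (e1 * e2) e2 (-p1) p2 (-p3) (-y) w l (sgn_mul he1 he2) he2 (by linarith) hl
      rw [abs_of_neg hy]
      refine le_of_eq_of_le ?_ this
      rw [← integral_neg_eq_self]
      congr 2; ext t
      have e : -y + 1/2 * t = -(y + 1/2 * (-t)) := by ring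
      simp only [Set.indicator, Set.mem_ofPred_eq, ← Gk_neg3 ψ r R γ τ e1 e2 _ _ _ _ _ _ he2,
        ← Gk_neg1]
      rw [e, neg_neg, abs_neg, abs_neg]
      congr 1
      apply propext; apply and_congr_right; intro _; apply and_congr_right; intro _
      constructor <;> intro h <;> linarith
    · have := piece2pos d e1 e2 p1 p2 p3 y w l he1 he2 hy hl
      rw [abs_of_pos hy]
      refine le_of_eq_of_le ?_ this
      congr 2; ext t
      simp only [Set.indicator, Set.mem_ofPred_eq]
      congr 1
      apply propext; apply and_congr_right; intro _; apply and_congr_right; intro _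
      constructor <;> intro h <;> linarith
    · have := piece2pos d e1 e2 (-p1) p2 p3 (-y) w l he1 he2 (by linarith) hl
      rw [abs_of_neg hy]
      refine le_of_eq_of_le ?_ this
      congr 2; ext t
      have e : -y + 1/2 * t = -(y + -1/2 * t) := by ring
      simp only [Set.indicator, Set.mem_ofPred_eq, ← Gk_neg1]
      rw [e, neg_neg, abs_neg]
      congr 1
      apply propext; apply and_congr_right; intro _; apply and_congr_right; intro _
      constructor <;> intro h <;> linarith
    · have := piece2pos d (e1 * e2) e2 p1 p2 (-p3) y w l (sgn_mul he1 he2) he2 hy hl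
      rw [abs_of_pos hy]
      refine le_of_eq_of_le ?_ this
      rw [← integral_neg_eq_self]
      congr 2; ext t
      have e : y + 1/2 * t = (y + -1/2 * (-t)) := by ring
      simp only [Set.indicator, Set.mem_ofPred_eq, ← Gk_neg3 ψ r R γ τ e1 e2 _ _ _ _ _ _ he2]
      rw [e, abs_neg]
      congr 1
      apply propext; apply and_congr_right; intro _; apply and_congr_right; intro _
      constructor <;> intro h <;> linarith
  refine key.trans (le_of_eq ?_)
  have hy' : 0 < |y| := abs_pos.2 hy
  set κ := τ * (2 * γ^3 / ((1 + 5 * γ) * R)^3) / 2 with hκ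
  have hκ0 : 0 < κ := by positivity
  have e3 : τ * (2 * γ^3 * |y| / ((1 + 5 * γ) * R)^3) / 2 = κ * |y| := by
    rw [hκ]; ring
  rw [e3, Real.sqrt_mul hκ0.le, Real.rpow_neg hy'.le, ← Real.sqrt_eq_rpow]
  have : 0 < √|y| := Real.sqrt_pos.2 hy'
  have : 0 < √κ := Real.sqrt_pos.2 hκ0
  field_simp

lemma pow_int (S α : ℝ) (hS : 0 < S) (hα1 : α < 1) :
    Integrable (Set.indicator (Set.Icc (-S) S) (fun y : ℝ => |y| ^ (-α))) ∧
    ∫ y, Set.indicator (Set.Icc (-S) S) (fun y : ℝ => |y| ^ (-α)) y = 2 * (S ^ (1 - α) / (1 - α)) := by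
  constructor
  · rw [integrable_indicator_iff measurableSet_Icc, integrableOn_Icc_iff_integrableOn_Ioc]
    have h1 : IntervalIntegrable (fun y : ℝ => |y| ^ (-α)) volume 0 S := by
      refine (intervalIntegral.intervalIntegrable_rpow' (r := -α) (by linarith)).congr ?_
      intro y hy
      rw [Set.uIoc_of_le hS.le] at hy
      simp only [abs_of_pos hy.1]
    have h2 : IntervalIntegrable (fun y : ℝ => |y| ^ (-α)) volume (-S) 0 := by
      have := (IntervalIntegrable.iff_comp_neg).1 h1
      simp only [abs_neg, neg_zero] at this
      exact this.symm
    have := h2.trans h1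
    rwa [intervalIntegrable_iff_integrableOn_Ioc_of_le (by linarith)] at this
  · have e : ∀ y, Set.indicator (Set.Icc (-S) S) (fun y : ℝ => |y| ^ (-α)) y
        = Set.indicator (Set.Iic S) (fun x : ℝ => x ^ (-α)) |y| := by
      intro y
      by_cases h : |y| ≤ S
      · rw [Set.indicator_of_mem (show y ∈ Set.Icc (-S) S from abs_le.1 h),
          Set.indicator_of_mem (show |y| ∈ Set.Iic S from h)]
      · rw [Set.indicator_of_notMem (show |y| ∉ Set.Iic S from h),
          Set.indicator_of_notMem (show y ∉ Set.Icc (-S) S from fun hh => h (abs_le.2 hh))]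
    simp_rw [e]
    rw [integral_comp_abs, setIntegral_indicator measurableSet_Iic, Set.Ioi_inter_Iic,
      ← intervalIntegral.integral_of_le hS.le, integral_rpow (Or.inl (by linarith))]
    have h3 : -α + 1 = 1 - α := by ring
    rw [h3, Real.zero_rpow (by linarith), sub_zero]

lemma box_int {X : Type*} [MeasurableSpace X] (μ : Measure X) (s : Set X) (hs : μ s ≠ ⊤)
    (f : X → ℂ) (hf : Measurable f) (h1 : ∀ x, ‖f x‖ ≤ 1) (h0 : ∀ x, x ∉ s → f x = 0) :
    Integrable f μ := by
  rw [← integrableOn_iff_integrable_of_support_subset (s := s)]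
  · exact Measure.integrableOn_of_bounded hs hf.aestronglyMeasurable (M := 1) (by
      filter_upwards with x; exact h1 x)
  · intro x hx
    by_contra h
    exact hx (h0 x h)

lemma fubini_shear (H : (ℝ × ℝ) × ℝ → ℂ) (R a M α β : ℝ) (hR : 0 < R) (hH : Measurable H)
    (h1 : ∀ p, ‖H p‖ ≤ 1) (h0 : ∀ p, (2 * R ≤ |p.2| ∨ 2 * R ≤ |p.1.1| ∨ 2 * R ≤ |p.1.2|) → H p = 0)
    (ha : |a| ≤ 1/2) (hM : 0 ≤ M) (hα : α < 1) (hβ : β < 1)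
    (hb : ∀ y w : ℝ, y ≠ 0 → w ≠ 0 → ‖∫ t, H ((w, t), y + a * t)‖ ≤ M * (|y| ^ (-α) * |w| ^ (-β))) :
    Integrable H ∧ ‖∫ p, H p‖ ≤
      M * ((2 * ((4 * R) ^ (1 - α) / (1 - α))) * (2 * ((4 * R) ^ (1 - β) / (1 - β)))) := by
  set S := 4 * R with hS
  have hS0 : 0 < S := by positivity
  have hbox : ∀ p, p ∉ (Set.Icc (-S) S ×ˢ Set.Icc (-S) S) ×ˢ Set.Icc (-S) S → H p = 0 := by
    intro p hp
    apply h0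
    by_contra! hcon
    apply hp
    refine ⟨⟨abs_le.1 ?_, abs_le.1 ?_⟩, abs_le.1 ?_⟩ <;> linarith [hcon.1, hcon.2.1, hcon.2.2]
  have hHi : Integrable H := by
    apply box_int _ ((Set.Icc (-S) S ×ˢ Set.Icc (-S) S) ×ˢ Set.Icc (-S) S) _ H hH h1 hbox
    exact ((isCompact_Icc.prod isCompact_Icc).prod isCompact_Icc).measure_lt_top.ne
  refine ⟨hHi, ?_⟩
  have hT : MeasurePreserving (fun p : (ℝ × ℝ) × ℝ => (p.1, p.2 + a * p.1.2)) volume volume := by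
    have := MeasurePreserving.skew_product (μa := (volume : Measure (ℝ × ℝ))) (μb := volume)
      (μc := (volume : Measure ℝ)) (μd := volume) (f := id) (MeasurePreserving.id _)
      (g := fun q x => x + a * q.2) (by
        show Measurable (fun p : (ℝ × ℝ) × ℝ => p.2 + a * p.1.2)
        fun_prop) (by
        filter_upwards with q
        exact (measurePreserving_add_right volume (a * q.2)).map_eq)
    exact this
  have e1 : ∫ p, H p = ∫ p : (ℝ × ℝ) × ℝ, H (p.1, p.2 + a * p.1.2) := by
    conv_lhs => rw [← hT.map_eq]
    rw [integral_map hT.measurable.aemeasurable hH.aestronglyMeasurable]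
  have hi2 : Integrable (fun p : (ℝ × ℝ) × ℝ => H (p.1, p.2 + a * p.1.2)) :=
    hT.integrable_comp_of_integrable hHi
  have hin : ∀ y, Integrable (fun q : ℝ × ℝ => H (q, y + a * q.2)) := by
    intro y
    apply box_int _ (Set.Icc (-S) S ×ˢ Set.Icc (-S) S)
      ((isCompact_Icc.prod isCompact_Icc).measure_lt_top.ne)
    · apply hH.comp
      fun_prop
    · intro q; exact h1 _
    · intro q hq
      apply hbox
      intro hh; exact hq hh.1
  obtain ⟨ia, va⟩ := pow_int S α hS0 hα
  obtain ⟨ib, vb⟩ := pow_int S β hS0 hβ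
  set ga := Set.indicator (Set.Icc (-S) S) (fun y : ℝ => |y| ^ (-α))
  set gb := Set.indicator (Set.Icc (-S) S) (fun y : ℝ => |y| ^ (-β))
  have hga : ∀ y, 0 ≤ ga y := fun y => Set.indicator_nonneg (fun _ _ => by positivity) y
  have hgb : ∀ y, 0 ≤ gb y := fun y => Set.indicator_nonneg (fun _ _ => by positivity) y
  have hpt : ∀ y w : ℝ, y ≠ 0 → w ≠ 0 → ‖∫ t, H ((w, t), y + a * t)‖ ≤ M * (ga y * gb w) := by
    intro y w hy hw
    by_cases hc : |y| ≤ S ∧ |w| ≤ S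
    · have k1 : ga y = |y| ^ (-α) := Set.indicator_of_mem (show y ∈ Set.Icc (-S) S from abs_le.1 hc.1) _
      have k2 : gb w = |w| ^ (-β) := Set.indicator_of_mem (show w ∈ Set.Icc (-S) S from abs_le.1 hc.2) _
      rw [k1, k2]; exact hb y w hy hw
    · have : ∫ t, H ((w, t), y + a * t) = 0 := by
        apply integral_eq_zero_of_ae
        filter_upwards with t
        apply h0
        by_contra! hcon
        obtain ⟨c1, c2, c3⟩ := hcon
        simp only at c1 c2 c3
        apply hc
        constructor
        · have e : y = (y + a * t) - a * t := by ring
          rw [e]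
          refine (abs_sub _ _).trans ?_
          rw [abs_mul]
          have : |a| * |t| ≤ 1/2 * (2 * R) := mul_le_mul ha c3.le (abs_nonneg _) (by norm_num)
          linarith
        · linarith
      rw [this, norm_zero]
      have := hga y
      have := hgb w
      positivity
  have step1 : ∀ y, y ≠ 0 → ‖∫ q : ℝ × ℝ, H (q, y + a * q.2)‖ ≤ ga y * (M * ∫ w, gb w) := by
    intro y hy
    rw [Measure.volume_eq_prod, integral_prod _ (hin y)]
    have := norm_integral_le_of_norm_le (μ := volume)
      (f := fun w => ∫ t, H ((w, t), y + a * t)) (g := fun w => M * (ga y * gb w))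
      ((ib.const_mul _).const_mul _) (by
        filter_upwards [Measure.ae_ne volume (0:ℝ)] with w hw
        exact hpt y w hy hw)
    refine this.trans (le_of_eq ?_)
    rw [integral_const_mul, integral_const_mul]; ring
  rw [e1, Measure.volume_eq_prod, integral_prod_symm _ hi2]
  have := norm_integral_le_of_norm_le (μ := volume)
      (f := fun y => ∫ q : ℝ × ℝ, H (q, y + a * q.2)) (g := fun y => ga y * (M * ∫ w, gb w))
      (ia.mul_const _) (by
        filter_upwards [Measure.ae_ne volume (0:ℝ)] with y hy
        exact step1 y hy)
  refine this.trans (le_of_eq ?_)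
  rw [integral_mul_const, va, vb]; ring

lemma coord_mp (i : Fin 3) : MeasurePreserving
    (fun ξ : EuclideanSpace ℝ (Fin 3) => ((ξ (i.succAbove 0), ξ (i.succAbove 1)), ξ i)) volume volume := by
  have h1 := PiLp.volume_preserving_ofLp (Fin 3)
  have h2 := volume_preserving_piFinSuccAbove (fun _ : Fin 3 => ℝ) i
  have h3 := volume_preserving_finTwoArrow ℝ
  have h4 := (MeasurePreserving.id (volume : Measure ℝ)).prod h3
  have h5 := Measure.measurePreserving_swap (μ := (volume : Measure ℝ)) (ν := (volume : Measure (ℝ × ℝ)))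
  exact h5.comp (h4.comp (h2.comp h1))

lemma coord_int (i : Fin 3) (g : (ℝ × ℝ) × ℝ → ℂ) (hg : Measurable g) (hi : Integrable g) :
    Integrable (fun ξ : EuclideanSpace ℝ (Fin 3) => g ((ξ (i.succAbove 0), ξ (i.succAbove 1)), ξ i)) ∧
    ∫ ξ : EuclideanSpace ℝ (Fin 3), g ((ξ (i.succAbove 0), ξ (i.succAbove 1)), ξ i) = ∫ p, g p := by
  have h := coord_mp i
  refine ⟨h.integrable_comp_of_integrable hi, ?_⟩
  conv_rhs => rw [← h.map_eq]
  rw [integral_map h.measurable.aemeasurable hg.aestronglyMeasurable]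

/-- First piece of the integrand. -/
noncomputable def H1 (ψ : ℝ → ℝ) (r R γ τ e1 e2 p1 p2 p3 : ℝ) : (ℝ × ℝ) × ℝ → ℂ :=
  Set.indicator {p | |p.2| ≤ |p.1.2| ∧ |p.1.1| ≤ |p.1.2|}
    (fun p => Gk ψ r R γ τ e1 e2 p1 p2 p3 p.2 p.1.1 p.1.2)

/-- Other pieces of the integrand. -/
noncomputable def H2 (ψ : ℝ → ℝ) (r R γ τ e1 e2 p1 p2 p3 σ : ℝ) (l : ℝ → ℝ) : (ℝ × ℝ) × ℝ → ℂ :=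
  Set.indicator {p | |p.1.2| < |p.2| ∧ l p.1.1 ≤ |p.1.2| ∧ 0 < σ * (p.2 * p.1.2)}
    (fun p => Gk ψ r R γ τ e1 e2 p1 p2 p3 p.2 p.1.1 p.1.2)

lemma Gk_meas {ψ : ℝ → ℝ} {V r R γ τ : ℝ} (d : Dat ψ V r R γ τ) (e1 e2 p1 p2 p3 : ℝ) :
    Measurable (fun p : (ℝ × ℝ) × ℝ => Gk ψ r R γ τ e1 e2 p1 p2 p3 p.2 p.1.1 p.1.2) :=
  (Gk_cont ψ d.hψ.continuous _ _ _ _ _ _ _ _ _ _ _ _ (by fun_prop) (by fun_prop)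
    (by fun_prop)).measurable

lemma H1_meas {ψ : ℝ → ℝ} {V r R γ τ : ℝ} (d : Dat ψ V r R γ τ) (e1 e2 p1 p2 p3 : ℝ) :
    Measurable (H1 ψ r R γ τ e1 e2 p1 p2 p3) := by
  apply (Gk_meas d e1 e2 p1 p2 p3).indicator
  have a : MeasurableSet {p : (ℝ × ℝ) × ℝ | |p.2| ≤ |p.1.2|} :=
    measurableSet_le (by fun_prop) (by fun_prop)
  have b : MeasurableSet {p : (ℝ × ℝ) × ℝ | |p.1.1| ≤ |p.1.2|} :=
    measurableSet_le (by fun_prop) (by fun_prop)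
  exact a.inter b

lemma H2_meas {ψ : ℝ → ℝ} {V r R γ τ : ℝ} (d : Dat ψ V r R γ τ) (e1 e2 p1 p2 p3 σ : ℝ)
    (l : ℝ → ℝ) (hl : Measurable l) :
    Measurable (H2 ψ r R γ τ e1 e2 p1 p2 p3 σ l) := by
  apply (Gk_meas d e1 e2 p1 p2 p3).indicator
  have a : MeasurableSet {p : (ℝ × ℝ) × ℝ | |p.1.2| < |p.2|} :=
    measurableSet_lt (by fun_prop) (by fun_prop)
  have b : MeasurableSet {p : (ℝ × ℝ) × ℝ | l p.1.1 ≤ |p.1.2|} :=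
    measurableSet_le (by fun_prop) (by fun_prop)
  have c : MeasurableSet {p : (ℝ × ℝ) × ℝ | 0 < σ * (p.2 * p.1.2)} :=
    measurableSet_lt (by fun_prop) (by fun_prop)
  exact a.inter (b.inter c)

lemma ind_norm {X : Type*} (s : Set X) (f : X → ℂ) (h : ∀ x, ‖f x‖ ≤ 1) (x : X) :
    ‖s.indicator f x‖ ≤ 1 := by
  by_cases hx : x ∈ s
  · rw [Set.indicator_of_mem hx]; exact h x
  · rw [Set.indicator_of_notMem hx, norm_zero]; exact zero_le_one

lemma ind_zero {X : Type*} (s : Set X) (f : X → ℂ) (x : X) (h : f x = 0) :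
    s.indicator f x = 0 := by
  by_cases hx : x ∈ s
  · rw [Set.indicator_of_mem hx]; exact h
  · rw [Set.indicator_of_notMem hx]

lemma H1_bound {ψ : ℝ → ℝ} {V r R γ τ : ℝ} (d : Dat ψ V r R γ τ) (e1 e2 p1 p2 p3 : ℝ)
    (he1 : e1 = 1 ∨ e1 = -1) (he2 : e2 = 1 ∨ e2 = -1) :
    Integrable (H1 ψ r R γ τ e1 e2 p1 p2 p3) ∧ ‖∫ p, H1 ψ r R γ τ e1 e2 p1 p2 p3 p‖ ≤
      (20 * (1 + V)^3 / √(τ * (3 * γ^5 / ((1 + 5 * γ) * R)^5) / 2)) *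
      ((2 * ((4 * R) ^ (1 - 3/4 : ℝ) / (1 - 3/4))) * (2 * ((4 * R) ^ (1 - 3/4 : ℝ) / (1 - 3/4)))) := by
  have hR := d.hR
  have hγ := d.hγ
  have hτ := d.hτ
  have hV0 := d.hV0
  apply fubini_shear _ R 0 _ _ _ (by linarith) (H1_meas d e1 e2 p1 p2 p3)
  · exact ind_norm _ _ (fun p => Gk_norm_le ψ d.hψ0 _ _ _ _ _ _ _ _ _ _ _ _)
  · intro p hp
    exact ind_zero _ _ _ (Gk_zero ψ d.hψ2 _ _ _ _ _ _ _ _ _ _ _ _ (by linarith) hp)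
  · simp
  · positivity
  · norm_num
  · norm_num
  · intro y w hy hw
    have := piece1 d e1 e2 p1 p2 p3 y w he1 he2 hy hw
    refine le_of_eq_of_le ?_ this
    have a : MeasurableSet {t : ℝ | |y| ≤ |t|} := measurableSet_le (by fun_prop) (by fun_prop)
    have b : MeasurableSet {t : ℝ | |w| ≤ |t|} := measurableSet_le (by fun_prop) (by fun_prop)
    have hs : MeasurableSet {t : ℝ | |y| ≤ |t| ∧ |w| ≤ |t|} := a.inter b
    rw [← integral_indicator hs]
    congr 2; ext t
    simp only [H1, Set.indicator, Set.mem_ofPred_eq, zero_mul, add_zero]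
    split_ifs <;> rfl

lemma H2_bound {ψ : ℝ → ℝ} {V r R γ τ : ℝ} (d : Dat ψ V r R γ τ) (e1 e2 p1 p2 p3 σ : ℝ)
    (l : ℝ → ℝ) (hl : Measurable l) (hl0 : ∀ w, 0 ≤ l w)
    (he1 : e1 = 1 ∨ e1 = -1) (he2 : e2 = 1 ∨ e2 = -1) (hσ : σ = 1/2 ∨ σ = -1/2) :
    Integrable (H2 ψ r R γ τ e1 e2 p1 p2 p3 σ l) ∧ ‖∫ p, H2 ψ r R γ τ e1 e2 p1 p2 p3 σ l p‖ ≤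
      (10 * (1 + V)^3 / √(τ * (2 * γ^3 / ((1 + 5 * γ) * R)^3) / 2)) *
      ((2 * ((4 * R) ^ (1 - 1/2 : ℝ) / (1 - 1/2))) * (2 * ((4 * R) ^ (1 - 0 : ℝ) / (1 - 0)))) := by
  have hR := d.hR
  have hγ := d.hγ
  have hτ := d.hτ
  have hV0 := d.hV0
  apply fubini_shear _ R σ _ _ _ (by linarith) (H2_meas d e1 e2 p1 p2 p3 σ l hl)
  · exact ind_norm _ _ (fun p => Gk_norm_le ψ d.hψ0 _ _ _ _ _ _ _ _ _ _ _ _)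
  · intro p hp
    exact ind_zero _ _ _ (Gk_zero ψ d.hψ2 _ _ _ _ _ _ _ _ _ _ _ _ (by linarith) hp)
  · rcases hσ with rfl | rfl
    · rw [abs_of_pos (by norm_num)]
    · rw [abs_of_neg (by norm_num)]; norm_num
  · positivity
  · norm_num
  · norm_num
  · intro y w hy hw
    have := piece2 d e1 e2 p1 p2 p3 y w (l w) σ he1 he2 hσ hy (hl0 w)
    rw [neg_zero, Real.rpow_zero, mul_one]
    exact this

lemma decomp {ψ : ℝ → ℝ} {V r R γ τ : ℝ} (d : Dat ψ V r R γ τ) (e1 e2 p1 p2 p3 x y z : ℝ) :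
    Gk ψ r R γ τ e1 e2 p1 p2 p3 x y z =
      H1 ψ r R γ τ e1 e2 p1 p2 p3 ((y, z), x) +
      (H2 ψ r R γ τ e1 e2 p1 p2 p3 (1/2) (fun _ => 0) ((y, z), x) +
      H2 ψ r R γ τ e1 e2 p1 p2 p3 (-1/2) (fun _ => 0) ((y, z), x)) +
      (H2 ψ r R γ τ e1 e2 p2 p1 p3 (1/2) (fun w => |w|) ((x, z), y) +
      H2 ψ r R γ τ e1 e2 p2 p1 p3 (-1/2) (fun w => |w|) ((x, z), y)) := by
  by_cases hz : z = 0
  · subst hz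
    have h0 := Gk_zero_z ψ d.hψ1 r R γ τ e1 e2
    simp only [H1, H2, Set.indicator, h0, ite_self, add_zero]
  · have hsgn : ∀ u : ℝ, |z| < |u| → (0 < 1/2 * (u * z) ∧ ¬ 0 < -1/2 * (u * z)) ∨
        (¬ 0 < 1/2 * (u * z) ∧ 0 < -1/2 * (u * z)) := by
      intro u hu
      have hu0 : u ≠ 0 := by
        rintro rfl
        rw [abs_zero] at hu
        linarith [abs_nonneg z]
      rcases lt_or_gt_of_ne (mul_ne_zero hu0 hz) with h | h
      · right; constructor <;> linarith
      · left; constructor <;> linarith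
    have hsw : Gk ψ r R γ τ e1 e2 p2 p1 p3 y x z = Gk ψ r R γ τ e1 e2 p1 p2 p3 x y z :=
      Gk_swap _ _ _ _ _ _ _ _ _ _ _ _ _
    simp only [H1, H2, Set.indicator, Set.mem_ofPred_eq, hsw]
    by_cases hx : |x| ≤ |z|
    · have hx' : ¬ |z| < |x| := not_lt.2 hx
      by_cases hy : |y| ≤ |z|
      · have hy' : ¬ |z| < |y| := not_lt.2 hy
        simp [hx, hy, hx', hy']
      · rcases hsgn y (not_le.1 hy) with h | h
        · simp only [hx, hy, hx', not_le.1 hy, h.1, h.2]; simp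
        · simp only [hx, hy, hx', not_le.1 hy, h.1, h.2]; simp
    · have hx' : |z| < |x| := not_le.1 hx
      rcases hsgn x hx' with h | h
      · simp only [hx, hx', h.1, h.2]; simp
      · simp only [hx, hx', h.1, h.2]; simp

lemma five_sum {X : Type*} [MeasurableSpace X] (μ : Measure X) (f g1 g2 g3 g4 g5 : X → ℂ)
    (B1 B2 B3 B4 B5 : ℝ)
    (j1 : Integrable g1 μ) (j2 : Integrable g2 μ) (j3 : Integrable g3 μ) (j4 : Integrable g4 μ)
    (j5 : Integrable g5 μ) (hf : ∀ x, f x = g1 x + (g2 x + g3 x) + (g4 x + g5 x))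
    (b1 : ‖∫ x, g1 x ∂μ‖ ≤ B1) (b2 : ‖∫ x, g2 x ∂μ‖ ≤ B2) (b3 : ‖∫ x, g3 x ∂μ‖ ≤ B3)
    (b4 : ‖∫ x, g4 x ∂μ‖ ≤ B4) (b5 : ‖∫ x, g5 x ∂μ‖ ≤ B5) :
    ‖∫ x, f x ∂μ‖ ≤ B1 + (B2 + B3) + (B4 + B5) := by
  have e1 : ∫ x, f x ∂μ = ∫ x, (g1 x + (g2 x + g3 x) + (g4 x + g5 x)) ∂μ := by
    congr 1; ext x; exact hf x
  have e2 : ∫ x, (g1 x + (g2 x + g3 x) + (g4 x + g5 x)) ∂μ =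
      ∫ x, (g1 x + (g2 x + g3 x)) ∂μ + ∫ x, (g4 x + g5 x) ∂μ :=
    integral_add (j1.add (j2.add j3)) (j4.add j5)
  have e3 : ∫ x, (g1 x + (g2 x + g3 x)) ∂μ = ∫ x, g1 x ∂μ + ∫ x, (g2 x + g3 x) ∂μ :=
    integral_add j1 (j2.add j3)
  rw [e1, e2, e3, integral_add j2 j3, integral_add j4 j5]
  refine (norm_add_le _ _).trans (add_le_add ((norm_add_le _ _).trans (add_le_add b1 ?_)) ?_)
  · exact (norm_add_le _ _).trans (add_le_add b2 b3)
  · exact (norm_add_le _ _).trans (add_le_add b4 b5)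

lemma sqrt4 (R : ℝ) : √(4 * R) = 2 * √R := by
  rw [Real.sqrt_mul (by norm_num)]
  congr 1
  rw [show (4:ℝ) = 2^2 by norm_num]; exact Real.sqrt_sq (by norm_num)

lemma constA (V R γ τ : ℝ) (hR : 1 ≤ R) (hγ : 0 < γ) (hτ : 0 < τ) :
    (20 * (1 + V)^3 / √(τ * (3 * γ^5 / ((1 + 5 * γ) * R)^5) / 2)) *
      ((2 * ((4 * R) ^ (1 - 3/4 : ℝ) / (1 - 3/4))) * (2 * ((4 * R) ^ (1 - 3/4 : ℝ) / (1 - 3/4))))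
      = 2560 * (1 + V)^3 / √(3 * γ^5 / (1 + 5 * γ)^5 / 2) * R^3 / √τ := by
  have hR0 : 0 < R := by linarith
  have hsR : 0 < √R := Real.sqrt_pos.2 hR0
  have hsτ : 0 < √τ := Real.sqrt_pos.2 hτ
  have hRR : √R * √R = R := Real.mul_self_sqrt hR0.le
  have k1pos : 0 < 3 * γ^5 / (1 + 5 * γ)^5 / 2 := by positivity
  have q1 : √(τ * (3 * γ^5 / ((1 + 5 * γ) * R)^5) / 2) =
      √τ * √(3 * γ^5 / (1 + 5 * γ)^5 / 2) / (R^2 * √R) := by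
    have : τ * (3 * γ^5 / ((1 + 5 * γ) * R)^5) / 2 =
      τ * (3 * γ^5 / (1 + 5 * γ)^5 / 2) / ((R^2)^2 * R) := by field_simp
    rw [this, Real.sqrt_div (by positivity), Real.sqrt_mul hτ.le, Real.sqrt_mul (by positivity),
      Real.sqrt_sq (by positivity)]
  have r1 : ((4 * R) ^ (1 - 3/4 : ℝ)) * ((4 * R) ^ (1 - 3/4 : ℝ)) = 2 * √R := by
    rw [← Real.rpow_add (by positivity), ← sqrt4, Real.sqrt_eq_rpow]; norm_num
  have hs1 : 0 < √(3 * γ^5 / (1 + 5 * γ)^5 / 2) := Real.sqrt_pos.2 k1pos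
  rw [q1]
  generalize √(3 * γ^5 / (1 + 5 * γ)^5 / 2) = s1 at hs1 ⊢
  have h2 : ((2 * ((4 * R) ^ (1 - 3/4 : ℝ) / (1 - 3/4))) * (2 * ((4 * R) ^ (1 - 3/4 : ℝ) / (1 - 3/4))))
      = 64 * (((4 * R) ^ (1 - 3/4 : ℝ)) * ((4 * R) ^ (1 - 3/4 : ℝ))) := by ring
  rw [h2, r1]
  have h3 : 20 * (1 + V)^3 / (√τ * s1 / (R^2 * √R)) * (64 * (2 * √R))
      = 2560 * (1 + V)^3 / s1 * (R^2 * (√R * √R)) / √τ := by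
    field_simp; norm_num; ring
  rw [h3, hRR]; ring

lemma constB (V R γ τ : ℝ) (hR : 1 ≤ R) (hγ : 0 < γ) (hτ : 0 < τ) :
    (10 * (1 + V)^3 / √(τ * (2 * γ^3 / ((1 + 5 * γ) * R)^3) / 2)) *
      ((2 * ((4 * R) ^ (1 - 1/2 : ℝ) / (1 - 1/2))) * (2 * ((4 * R) ^ (1 - 0 : ℝ) / (1 - 0))))
      = 640 * (1 + V)^3 / √(2 * γ^3 / (1 + 5 * γ)^3 / 2) * R^3 / √τ := by
  have hR0 : 0 < R := by linarith
  have hsR : 0 < √R := Real.sqrt_pos.2 hR0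
  have hsτ : 0 < √τ := Real.sqrt_pos.2 hτ
  have hRR : √R * √R = R := Real.mul_self_sqrt hR0.le
  have k2pos : 0 < 2 * γ^3 / (1 + 5 * γ)^3 / 2 := by positivity
  have q2 : √(τ * (2 * γ^3 / ((1 + 5 * γ) * R)^3) / 2) =
      √τ * √(2 * γ^3 / (1 + 5 * γ)^3 / 2) / (R * √R) := by
    have : τ * (2 * γ^3 / ((1 + 5 * γ) * R)^3) / 2 =
      τ * (2 * γ^3 / (1 + 5 * γ)^3 / 2) / (R^2 * R) := by field_simp
    rw [this, Real.sqrt_div (by positivity), Real.sqrt_mul hτ.le, Real.sqrt_mul (by positivity),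
      Real.sqrt_sq (by linarith)]
  have r2 : ((4 * R) ^ (1 - 1/2 : ℝ)) = 2 * √R := by
    rw [← sqrt4, Real.sqrt_eq_rpow]; norm_num
  have r3 : ((4 * R) ^ (1 - 0 : ℝ)) = 4 * R := by
    rw [sub_zero, Real.rpow_one]
  have hs2 : 0 < √(2 * γ^3 / (1 + 5 * γ)^3 / 2) := Real.sqrt_pos.2 k2pos
  rw [q2, r2, r3]
  generalize √(2 * γ^3 / (1 + 5 * γ)^3 / 2) = s2 at hs2 ⊢
  have h3 : 10 * (1 + V)^3 / (√τ * s2 / (R * √R)) *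
      ((2 * ((2 * √R) / (1 - 1/2))) * (2 * ((4 * R) / (1 - 0))))
      = 640 * (1 + V)^3 / s2 * (R^2 * (√R * √R)) / √τ := by
    field_simp; norm_num; ring
  rw [h3, hRR]; ring

lemma Gk_bound {ψ : ℝ → ℝ} {V r R γ τ : ℝ} (d : Dat ψ V r R γ τ) (e1 e2 p1 p2 p3 : ℝ)
    (he1 : e1 = 1 ∨ e1 = -1) (he2 : e2 = 1 ∨ e2 = -1) :
    ‖∫ ξ : EuclideanSpace ℝ (Fin 3), Gk ψ r R γ τ e1 e2 p1 p2 p3 (ξ 0) (ξ 1) (ξ 2)‖ ≤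
      (2560 * (1 + V)^3 / √(3 * γ^5 / (1 + 5 * γ)^5 / 2) +
      2560 * (1 + V)^3 / √(2 * γ^3 / (1 + 5 * γ)^3 / 2)) * R^3 / √τ := by
  have hR := d.hR
  have hγ := d.hγ
  have hτ := d.hτ
  have hV0 := d.hV0
  have hm0 : Measurable (fun _ : ℝ => (0:ℝ)) := measurable_const
  have hma : Measurable (fun w : ℝ => |w|) := by fun_prop
  obtain ⟨i1, b1⟩ := H1_bound d e1 e2 p1 p2 p3 he1 he2
  obtain ⟨i2, b2⟩ := H2_bound d e1 e2 p1 p2 p3 (1/2) (fun _ => 0) hm0 (fun _ => le_rfl) he1 he2 (Or.inl rfl)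
  obtain ⟨i3, b3⟩ := H2_bound d e1 e2 p1 p2 p3 (-1/2) (fun _ => 0) hm0 (fun _ => le_rfl) he1 he2 (Or.inr rfl)
  obtain ⟨i4, b4⟩ := H2_bound d e1 e2 p2 p1 p3 (1/2) (fun w => |w|) hma (fun w => abs_nonneg w) he1 he2 (Or.inl rfl)
  obtain ⟨i5, b5⟩ := H2_bound d e1 e2 p2 p1 p3 (-1/2) (fun w => |w|) hma (fun w => abs_nonneg w) he1 he2 (Or.inr rfl)
  obtain ⟨j1, v1⟩ := coord_int 0 _ (H1_meas d e1 e2 p1 p2 p3) i1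
  obtain ⟨j2, v2⟩ := coord_int 0 _ (H2_meas d e1 e2 p1 p2 p3 _ _ hm0) i2
  obtain ⟨j3, v3⟩ := coord_int 0 _ (H2_meas d e1 e2 p1 p2 p3 _ _ hm0) i3
  obtain ⟨j4, v4⟩ := coord_int 1 _ (H2_meas d e1 e2 p2 p1 p3 _ _ hma) i4
  obtain ⟨j5, v5⟩ := coord_int 1 _ (H2_meas d e1 e2 p2 p1 p3 _ _ hma) i5
  rw [← v1] at b1
  rw [← v2] at b2
  rw [← v3] at b3
  rw [← v4] at b4
  rw [← v5] at b5
  have e00 : (0 : Fin 3).succAbove (0 : Fin 2) = 1 := by decide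
  have e01 : (0 : Fin 3).succAbove (1 : Fin 2) = 2 := by decide
  have e10 : (1 : Fin 3).succAbove (0 : Fin 2) = 0 := by decide
  have e11 : (1 : Fin 3).succAbove (1 : Fin 2) = 2 := by decide
  simp only [e00, e01, e10, e11] at b1 b2 b3 b4 b5 j1 j2 j3 j4 j5
  have key := five_sum volume
    (fun ξ : EuclideanSpace ℝ (Fin 3) => Gk ψ r R γ τ e1 e2 p1 p2 p3 (ξ 0) (ξ 1) (ξ 2))
    _ _ _ _ _ _ _ _ _ _ j1 j2 j3 j4 j5
    (fun ξ => decomp d e1 e2 p1 p2 p3 (ξ 0) (ξ 1) (ξ 2)) b1 b2 b3 b4 b5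
  refine key.trans (le_of_eq ?_)
  rw [constA V R γ τ hR hγ hτ, constB V R γ τ hR hγ hτ]
  ring


lemma cutoff_var (ψ : ℝ → ℝ) (hψ : IsCutoff ψ) :
    ∃ V : ℝ, 0 ≤ V ∧ ∀ u v, u ≤ v → ∫ t in u..v, |deriv ψ t| ≤ V := by
  obtain ⟨hc, h01, h1, h2⟩ := hψ
  have hcd : Continuous (deriv ψ) := hc.continuous_deriv (by exact_mod_cast le_top)
  have hz : ∀ t, t ∉ Set.Icc (1:ℝ) 2 → |deriv ψ t| = 0 := by
    intro t ht
    rw [Set.mem_Icc, not_and_or, not_le, not_le] at ht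
    rcases ht with ht | ht
    · have : ψ =ᶠ[nhds t] fun _ => 1 := by
        filter_upwards [Iio_mem_nhds ht] with s hs using h1 s (le_of_lt hs)
      rw [this.deriv_eq]; simp
    · have : ψ =ᶠ[nhds t] fun _ => 0 := by
        filter_upwards [Ioi_mem_nhds ht] with s hs using h2 s (le_of_lt hs)
      rw [this.deriv_eq]; simp
  have hIntg : Integrable (fun t => |deriv ψ t|) := by
    apply Continuous.integrable_of_hasCompactSupport hcd.abs
    exact HasCompactSupport.intro isCompact_Icc hz
  refine ⟨∫ t, |deriv ψ t|, integral_nonneg (fun _ => abs_nonneg _), ?_⟩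
  intro u v huv
  rw [intervalIntegral.integral_of_le huv]
  exact setIntegral_le_integral hIntg (Eventually.of_forall fun _ => abs_nonneg _)

lemma Kker_eq (ψ : ℝ → ℝ) (r R γ ε1 ε2 τ : ℝ) (x : E3) :
    Kker ψ r R γ ε1 ε2 τ x = ∫ ξ : EuclideanSpace ℝ (Fin 3),
      Gk ψ r R γ τ ε1 ε2 (x 0) (x 1) (x 2) (ξ 0) (ξ 1) (ξ 2) := by
  unfold Kker
  congr 1; ext ξ
  have hn2 : ‖ξ‖ ^ 2 = ξ 0 ^ 2 + ξ 1 ^ 2 + ξ 2 ^ 2 := by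
    rw [EuclideanSpace.real_norm_sq_eq, Fin.sum_univ_three]
  have hn : ‖ξ‖ = √(ξ 0 ^ 2 + ξ 1 ^ 2 + ξ 2 ^ 2) := by
    rw [← hn2, Real.sqrt_sq (norm_nonneg _)]
  have hin : (inner ℝ x ξ : ℝ) = x 0 * ξ 0 + x 1 * ξ 1 + x 2 * ξ 2 := by
    rw [PiLp.inner_apply, Fin.sum_univ_three]
    simp only [RCLike.inner_apply, conj_trivial]; ring
  unfold Gk Psi lamEV xih
  rw [hn2, hin, hn]
  congr 2
  push_cast
  ring

/-- For `0 < r ≤ 1 ≤ R`, each phase `λ = λ_{ε₁,ε₂}` and every `τ > 0`,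
`sup_x |K_λ(τ,x)| ≤ C R³ r^{−2} τ^{−1/2}`, with `C` depending only on `γ̄` and `ψ`. -/
theorem Kker_bound (γ : ℝ) (hγ : 0 < γ) (ψ : ℝ → ℝ) (hψ : IsCutoff ψ) :
    ∃ C : ℝ, 0 < C ∧
      ∀ r R : ℝ, 0 < r → r ≤ 1 → 1 ≤ R →
      ∀ ε1 ε2 : ℝ, (ε1 = 1 ∨ ε1 = -1) → (ε2 = 1 ∨ ε2 = -1) →
      ∀ τ : ℝ, 0 < τ →
      ∀ x : E3, ‖Kker ψ r R γ ε1 ε2 τ x‖ ≤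
        C * R ^ 3 * r ^ (-(2:ℝ)) * τ ^ (-(1:ℝ)/2) := by
  obtain ⟨V, hV0, hV⟩ := cutoff_var ψ hψ
  obtain ⟨hc, h01, h1, h2⟩ := hψ
  refine ⟨2560 * (1 + V)^3 / √(3 * γ^5 / (1 + 5 * γ)^5 / 2) +
      2560 * (1 + V)^3 / √(2 * γ^3 / (1 + 5 * γ)^3 / 2), by positivity, ?_⟩
  intro r R hr hr1 hR ε1 ε2 he1 he2 τ hτ x
  have d : Dat ψ V r R γ τ := ⟨hc.of_le (by exact_mod_cast le_top), hV, hV0, h01, h1, h2, hr, hR, hγ, hτ⟩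
  rw [Kker_eq]
  refine (Gk_bound d ε1 ε2 (x 0) (x 1) (x 2) he1 he2).trans ?_
  have ht : τ ^ (-(1:ℝ)/2) = 1 / √τ := by
    rw [neg_div, Real.rpow_neg hτ.le, Real.sqrt_eq_rpow]; exact (one_div _).symm
  have hrr : 1 ≤ r ^ (-(2:ℝ)) :=
    Real.one_le_rpow_of_pos_of_le_one_of_nonpos hr hr1 (by norm_num)
  rw [ht]
  have hC : 0 ≤ 2560 * (1 + V)^3 / √(3 * γ^5 / (1 + 5 * γ)^5 / 2) +
      2560 * (1 + V)^3 / √(2 * γ^3 / (1 + 5 * γ)^3 / 2) := by positivity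
  generalize 2560 * (1 + V)^3 / √(3 * γ^5 / (1 + 5 * γ)^5 / 2) +
      2560 * (1 + V)^3 / √(2 * γ^3 / (1 + 5 * γ)^3 / 2) = C at hC ⊢
  have hp : 0 ≤ C * R ^ 3 / √τ := by positivity
  calc C * R ^ 3 / √τ = C * R ^ 3 / √τ * 1 := (mul_one _).symm
    _ ≤ C * R ^ 3 / √τ * r ^ (-(2:ℝ)) := mul_le_mul_of_nonneg_left hrr hp
    _ = C * R ^ 3 * r ^ (-(2:ℝ)) * (1 / √τ) := by ring
end
end
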